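/- arXiv:1602.01992 — 2 statements merged into one kernel-verified Lean document; each statement's English description precedes it below -/
import Mathlib

section
/- Let {G_i}_{i≥1} be a sequence of finite abelian groups and, for each i, let H_i and K_i be subgroups of G_i, with |H_i| → ∞, |K_i| → ∞ and |G_i| → ∞ as i → ∞. Let S_i = {(x, x+a, x+b, x+a+b) : x ∈ G_i, a ∈ H_i, b ∈ K_i} ⊆ G_i^4 and let S_i^{(4)} be the set of tuples in S_i whose four entries are pairwise distinct. Assume max{|H_i|, |K_i|} ≤ (|S_i^{(4)}|/|G_i|)^{2/3} for every i. Then for each δ with 0 < δ < 1/40 there exist a constant C > 0 and an index i₀ (both depending on δ and the sequence) such that for every i ≥ i₀ and every integer t with t > (C/δ)·(|G_i|^4/|S_i^{(4)}|)^{1/3}, the number of subsets X ⊆ G_i with |X| = t and X^4 ∩ S_i^{(4)} = ∅ is at most the binomial coefficient C(⌊2δ|G_i|⌋, t). -/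
open Finset Filter Topology

attribute [local instance] Classical.propDecidable

/-- The set `S^{(k)}` of tuples of `S` with pairwise distinct entries. -/
noncomputable def distinctPart {k : ℕ} {G : Type} (S : Finset (Fin k → G)) :
    Finset (Fin k → G) :=
  S.filter fun x => Function.Injective x

lemma kw_aux {V : Type} (adj : V → V → Prop) (M : ℕ) (d : ℝ) (V0 : Finset V)
    (hdeg : ∀ U ⊆ V0, M < U.card → ∃ v ∈ U, d ≤ ((U.filter (fun w => adj v w)).card : ℝ)) :
    ∀ n : ℕ, ∀ U ⊆ V0, U.card ≤ n → ∀ q : ℕ, (U.card : ℝ) ≤ q * d →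
      ∃ f : Finset V → Finset V, (∀ T, (f T).card ≤ M) ∧
        ∀ I ⊆ U, (∀ x ∈ I, ∀ y ∈ I, ¬ adj x y) → ∃ T ⊆ I, T.card ≤ q ∧ I ⊆ T ∪ f T := by
  intro n
  induction n with
  | zero =>
    intro U hU hc q _
    refine ⟨fun _ => ∅, by simp, fun I hI _ => ⟨∅, by simp, by simp, ?_⟩⟩
    have : U = ∅ := by simpa using hc
    subst this
    simpa using hI
  | succ n ih =>
    intro U hU hc q hq
    by_cases hM : U.card ≤ M
    · exact ⟨fun _ => U, fun _ => hM, fun I hI _ => ⟨∅, by simp, by simp, by simpa using hI⟩⟩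
    push Not at hM
    obtain ⟨v, hv, hd⟩ := hdeg U hU hM
    have hpos : 0 < U.card := by omega
    have hq0 : q ≠ 0 := by
      rintro rfl
      have : (0:ℝ) < U.card := by exact_mod_cast hpos
      simp at hq
      simp [hq] at hv
    obtain ⟨q', rfl⟩ := Nat.exists_eq_succ_of_ne_zero hq0
    have he : (U.erase v).card ≤ n := by rw [card_erase_of_mem hv]; omega
    have heU : (U.erase v).card ≤ U.card := card_le_card (erase_subset _ _)
    obtain ⟨f0, hf0, hf0'⟩ := ih (U.erase v) ((erase_subset _ _).trans hU) he (q'+1)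
      (le_trans (by exact_mod_cast heU) hq)
    set U1 := (U.erase v).filter (fun w => ¬ adj v w) with hU1
    have hU1s : U1 ⊆ U.erase v := filter_subset _ _
    have hsum : U1.card + (U.filter (fun w => adj v w)).card ≤ U.card := by
      rw [← card_union_of_disjoint]
      · apply card_le_card
        apply union_subset (hU1s.trans (erase_subset _ _)) (filter_subset _ _)
      · rw [disjoint_left]
        intro a ha hb
        simp [hU1] at ha hb
        exact ha.2 hb.2
    obtain ⟨f1, hf1, hf1'⟩ := ih U1 (hU1s.trans ((erase_subset _ _).trans hU))
      ((card_le_card hU1s).trans he) q' (by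
        have : (U1.card : ℝ) + ((U.filter (fun w => adj v w)).card : ℝ) ≤ U.card := by
          exact_mod_cast hsum
        push_cast at hq
        linarith)
    refine ⟨fun T => if v ∈ T then f1 (T.erase v) else f0 T, ?_, ?_⟩
    · intro T
      dsimp only
      split_ifs
      · exact hf1 _
      · exact hf0 _
    · intro I hI hind
      by_cases hvI : v ∈ I
      · obtain ⟨T, hT, hTc, hIT⟩ := hf1' (I.erase v) (by
          intro x hx
          simp only [mem_erase] at hx
          simp only [hU1, mem_filter, mem_erase]
          exact ⟨⟨hx.1, hI hx.2⟩, hind v hvI x hx.2⟩)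
          (fun x hx y hy => hind x (mem_of_mem_erase hx) y (mem_of_mem_erase hy))
        have hvT : v ∉ T := fun h => by simpa using hT h
        refine ⟨insert v T, ?_, ?_, ?_⟩
        · apply insert_subset hvI (hT.trans (erase_subset _ _))
        · rw [card_insert_of_notMem hvT]; omega
        · intro x hx
          by_cases hxv : x = v
          · simp [hxv]
          · have := hIT (mem_erase.2 ⟨hxv, hx⟩)
            simp only [mem_union] at this
            simp only [mem_union, mem_insert, true_or, if_true, erase_insert hvT]
            tauto
      · obtain ⟨T, hT, hTc, hIT⟩ := hf0' I (by
          intro x hx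
          exact mem_erase.2 ⟨fun h => hvI (h ▸ hx), hI hx⟩) hind
        have hvT : v ∉ T := fun h => hvI (hT h)
        exact ⟨T, hT, hTc, by simpa [hvT] using hIT⟩

lemma desc_aux (M n j : ℕ) (h : 3 * M ≤ 2 * n) :
    3 ^ j * M.descFactorial j ≤ 2 ^ j * n.descFactorial j := by
  induction j with
  | zero => simp
  | succ j ih =>
    rw [Nat.descFactorial_succ, Nat.descFactorial_succ]
    have h1 : 3 * (M - j) ≤ 2 * (n - j) := by omega
    calc 3 ^ (j+1) * ((M - j) * M.descFactorial j)
        = (3 * (M-j)) * (3 ^ j * M.descFactorial j) := by ring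
      _ ≤ (2 * (n-j)) * (2 ^ j * n.descFactorial j) := Nat.mul_le_mul h1 ih
      _ = _ := by ring

lemma binom_aux (N n M t m L : ℕ) (R : ℝ) (hR : 0 ≤ R) (hn : 2 * M ≤ n) (hL : 4 ≤ L)
    (hm : L * m ≤ t) (hN : (N : ℝ) ≤ R * M) (hRL : 60 * R ≤ (15/11 : ℝ) ^ L) :
    ((4 ^ m * N.choose m * M.choose (t - m) : ℕ) : ℝ) ≤ n.choose t := by
  have h4m : 4 * m ≤ t := le_trans (Nat.mul_le_mul_right m hL) hm
  by_cases hj : M < t - m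
  · rw [Nat.choose_eq_zero_of_lt hj]; simp
  push Not at hj
  have hmt : m ≤ t := by omega
  have htn : t ≤ n := by omega
  have h1 : (N.choose m : ℝ) ≤ R ^ m * n.choose m := by
    have a1 : N.choose m * m.factorial ≤ N ^ m := by
      rw [mul_comm, ← Nat.descFactorial_eq_factorial_mul_choose]
      exact Nat.descFactorial_le_pow _ _
    have a2 : M ^ m ≤ n.choose m * m.factorial := by
      rw [mul_comm, ← Nat.descFactorial_eq_factorial_mul_choose]
      exact (Nat.pow_le_pow_left (by omega) m).trans (Nat.pow_sub_le_descFactorial n m)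
    have a1' : (N.choose m : ℝ) * m.factorial ≤ (N:ℝ) ^ m := by exact_mod_cast a1
    have a2' : (M:ℝ) ^ m ≤ n.choose m * m.factorial := by exact_mod_cast a2
    have a3 : (N:ℝ)^m ≤ R^m * (M:ℝ)^m := by
      rw [← mul_pow]; exact pow_le_pow_left₀ (by positivity) hN m
    have hf : (0:ℝ) < m.factorial := by exact_mod_cast m.factorial_pos
    have a4 : (N.choose m : ℝ) * m.factorial ≤ (R ^ m * n.choose m) * m.factorial := by
      calc _ ≤ _ := a1'
        _ ≤ _ := a3
        _ ≤ R^m * (n.choose m * m.factorial) := by gcongr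
        _ = _ := by ring
    exact le_of_mul_le_mul_right a4 hf
  have h2 : (3/2:ℝ)^(t-m) * M.choose (t-m) ≤ (n-m).choose (t-m) := by
    have a := desc_aux M (n-m) (t-m) (by omega)
    rw [Nat.descFactorial_eq_factorial_mul_choose, Nat.descFactorial_eq_factorial_mul_choose] at a
    have a' : (3:ℝ)^(t-m) * ((t-m).factorial * M.choose (t-m)) ≤
      2^(t-m) * ((t-m).factorial * (n-m).choose (t-m)) := by exact_mod_cast a
    have hf : (0:ℝ) < (t-m).factorial := by exact_mod_cast (t-m).factorial_pos
    have hf2 : (0:ℝ) < 2^(t-m) := by positivity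
    rw [div_pow, div_mul_eq_mul_div, div_le_iff₀ hf2]
    refine le_of_mul_le_mul_right ?_ hf
    linarith
  have h3 : (t.choose m : ℝ) ≤ (11/10)^t * 10^m := by
    have a := add_pow (1/10:ℝ) 1 t
    have b : (1/10:ℝ)^m * 1^(t-m) * t.choose m ≤ (1/10+1)^t := by
      rw [a]
      exact Finset.single_le_sum (f := fun k => (1/10:ℝ)^k * 1^(t-k) * t.choose k)
        (fun i _ => by positivity) (by simp; omega)
    have hp : (0:ℝ) < 10^m := by positivity
    rw [one_pow, mul_one, one_div, inv_pow, inv_mul_le_iff₀ hp] at b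
    norm_num at b ⊢
    linarith
  have h4 : (n.choose t : ℝ) * t.choose m = n.choose m * (n-m).choose (t-m) := by
    exact_mod_cast Nat.choose_mul hmt
  have h5 : (60 * R)^m ≤ (15/11:ℝ)^t := by
    calc (60*R)^m ≤ ((15/11:ℝ)^L)^m := pow_le_pow_left₀ (by positivity) hRL m
      _ = (15/11:ℝ)^(L*m) := by rw [pow_mul]
      _ ≤ _ := pow_le_pow_right₀ (by norm_num) hm
  have htm : (0:ℝ) < t.choose m := by exact_mod_cast Nat.choose_pos hmt
  refine le_of_mul_le_mul_right ?_ htm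
  rw [h4]
  push_cast
  have h6 : (4:ℝ)^m * R^m * ((11/10)^t * 10^m) ≤ (3/2)^(t-m) := by
    have e : (3/2:ℝ)^t = (3/2)^(t-m) * (3/2)^m := by rw [← pow_add]; congr 1; omega
    have hp : (0:ℝ) < (3/2)^m := by positivity
    refine le_of_mul_le_mul_right ?_ hp
    rw [← e]
    calc (4:ℝ)^m * R^m * ((11/10)^t * 10^m) * (3/2)^m = (11/10)^t * (4 * R * 10 * (3/2))^m := by
          simp only [mul_pow]; ring
      _ = (11/10)^t * (60*R)^m := by ring_nf
      _ ≤ (11/10)^t * (15/11)^t := by gcongr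
      _ = _ := by rw [← mul_pow]; norm_num
  calc (4:ℝ)^m * N.choose m * M.choose (t-m) * t.choose m
      ≤ 4^m * (R^m * n.choose m) * M.choose (t-m) * ((11/10)^t * 10^m) := by gcongr
    _ = (4^m * R^m * ((11/10)^t * 10^m)) * (n.choose m * M.choose (t-m)) := by ring
    _ ≤ (3/2)^(t-m) * (n.choose m * M.choose (t-m)) := by gcongr
    _ = n.choose m * ((3/2)^(t-m) * M.choose (t-m)) := by ring
    _ ≤ _ := by gcongr

lemma count_aux {V : Type} [Fintype V] (𝓧 : Finset (Finset V)) (F : Finset V → Finset V → Finset V)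
    (M p t : ℕ) (hF : ∀ A B, (F A B).card ≤ M) (hpt : 2 * p ≤ t)
    (hX : ∀ X ∈ 𝓧, X.card = t ∧ ∃ A ⊆ X, ∃ B ⊆ X, A.card ≤ p ∧ B.card ≤ p ∧ X ⊆ A ∪ B ∪ F A B) :
    𝓧.card ≤ 4 ^ (2*p) * (Fintype.card V).choose (2*p) * M.choose (t - 2*p) := by
  have hsub : 𝓧 ⊆ (powersetCard (2*p) (univ : Finset V)).biUnion fun Z =>
      (Z.powerset ×ˢ Z.powerset).biUnion fun AB =>
        (powersetCard (t - 2*p) (F AB.1 AB.2)).image (fun Y => Z ∪ Y) := by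
    intro X h
    obtain ⟨ht, A, hA, B, hB, hAp, hBp, hXs⟩ := hX X h
    obtain ⟨Z, hZ1, hZ2, hZc⟩ := Finset.exists_subsuperset_card_eq (s := A ∪ B) (t := X) (n := 2*p)
      (union_subset hA hB) ((card_union_le _ _).trans (by omega)) (by omega)
    simp only [mem_biUnion, mem_powersetCard, mem_product, mem_powerset, mem_image]
    refine ⟨Z, ⟨subset_univ _, hZc⟩, (A, B), ⟨subset_union_left.trans hZ1,
      subset_union_right.trans hZ1⟩, X \ Z, ⟨?_, ?_⟩, ?_⟩
    · intro x hx
      replace hx := Finset.mem_sdiff.1 hx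
      have := hXs hx.1
      rw [mem_union] at this
      rcases this with h | h
      · exact absurd (hZ1 h) hx.2
      · exact h
    · rw [card_sdiff_of_subset hZ2, hZc, ht]
    · exact union_sdiff_of_subset hZ2
  refine (card_le_card hsub).trans ?_
  refine (card_biUnion_le_card_mul _ _ (4^(2*p) * M.choose (t-2*p)) ?_).trans ?_
  · intro Z hZ
    rw [mem_powersetCard] at hZ
    refine (card_biUnion_le_card_mul _ _ (M.choose (t-2*p)) ?_).trans ?_
    · intro AB _
      refine card_image_le.trans ?_
      rw [card_powersetCard]
      exact Nat.choose_le_choose _ (hF _ _)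
    · rw [card_product, card_powerset, hZ.2, ← mul_pow]; norm_num
  · rw [card_powersetCard, card_univ]
    apply le_of_eq; ring

def RectFree {G : Type} [AddCommGroup G] (H K : AddSubgroup G) (X : Finset G) : Prop :=
  ∀ x a b, a ∈ H → b ∈ K → a ≠ 0 → b ≠ 0 → a ≠ b → a + b ≠ 0 →
    x ∈ X → x + a ∈ X → x + b ∈ X → x + a + b ∉ X

def RAdj {G : Type} [AddCommGroup G] (H K : AddSubgroup G) (X0 : Finset G) (x y : G) : Prop :=
  x ≠ y ∧ x - y ∈ H ∧ ∃ c ∈ X0, ∃ d ∈ X0, x - c = y - d ∧ x - c ∈ K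

lemma indep_aux {G : Type} [AddCommGroup G] (H K : AddSubgroup G) (X X0 : Finset G)
    (hX : RectFree H K X) (h0 : X0 ⊆ X) :
    ∀ x ∈ X \ X0, ∀ y ∈ X \ X0, ¬ RAdj H K X0 x y := by
  rintro x hx y hy ⟨hne, hH, c, hc, d, hd, e, hK⟩
  replace hx := Finset.mem_sdiff.1 hx
  replace hy := Finset.mem_sdiff.1 hy
  have hce : c = y + (x - y) + (d - y) := by
    have : c = x - (y - d) := by rw [← e]; abel
    rw [this]; abel
  refine hX y (x - y) (d - y) hH ?_ (sub_ne_zero.2 hne) ?_ ?_ ?_ hy.1 ?_ ?_ ?_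
  · rw [e] at hK
    simpa using K.neg_mem hK
  · intro h
    exact hy.2 (sub_eq_zero.1 h ▸ hd)
  · intro h
    have : x = d := sub_left_injective h
    exact hx.2 (this ▸ hd)
  · intro h
    rw [add_assoc, h, add_zero] at hce
    exact hy.2 (hce ▸ hc)
  · simpa using hx.1
  · simpa using h0 hd
  · rw [← hce]; exact h0 hc

lemma mult_aux {G : Type} [AddCommGroup G] (H K : AddSubgroup G) (X0 : Finset G)
    (hX : RectFree H K X0) (x y : G) (hne : x ≠ y) (hH : x - y ∈ H) :
    (X0.filter (fun d => d + (x - y) ∈ X0 ∧ y - d ∈ K)).card ≤ 3 := by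
  rcases (X0.filter (fun d => d + (x - y) ∈ X0 ∧ y - d ∈ K)).eq_empty_or_nonempty with h | ⟨d0, h⟩
  · rw [h]; simp
  rw [mem_filter] at h
  refine (card_le_card (t := {d0, d0 + (x-y), d0 - (x-y)}) ?_).trans card_le_three
  intro d hd
  rw [mem_filter] at hd
  simp only [mem_insert, mem_singleton]
  by_contra hcon
  push Not at hcon
  refine hX d0 (x-y) (d - d0) hH ?_ (sub_ne_zero.2 hne) (sub_ne_zero.2 hcon.1) ?_ ?_ h.1 h.2.1 ?_ ?_
  · have := K.sub_mem h.2.2 hd.2.2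
    simpa using this
  · intro e
    apply hcon.2.1
    rw [e]; abel
  · intro e
    apply hcon.2.2
    have : x - y = -(d - d0) := eq_neg_of_add_eq_zero_left e
    rw [this]; abel
  · simpa using hd.1
  · have : d0 + (x - y) + (d - d0) = d + (x - y) := by abel
    rw [this]; exact hd.2.1

lemma cs_aux {α β : Type} (W : Finset α) (Z : Finset β) (φ : α → β) (h : ∀ w ∈ W, φ w ∈ Z) :
    W.card ^ 2 ≤ Z.card * ((W ×ˢ W).filter (fun p => φ p.1 = φ p.2)).card := by
  have e1 : W.card = ∑ z ∈ Z, (W.filter (fun w => φ w = z)).card :=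
    card_eq_sum_card_fiberwise h
  have e2 : ((W ×ˢ W).filter (fun p => φ p.1 = φ p.2)).card
      = ∑ z ∈ Z, (W.filter (fun w => φ w = z)).card ^ 2 := by
    rw [card_eq_sum_card_fiberwise (f := fun p => φ p.1) (t := Z)]
    · apply sum_congr rfl
      intro z _
      rw [sq, ← card_product]
      congr 1
      ext ⟨a, b⟩
      simp only [mem_filter, mem_product]
      constructor
      · rintro ⟨⟨⟨ha, hb⟩, e⟩, e'⟩
        exact ⟨⟨ha, e'⟩, hb, e ▸ e'⟩
      · rintro ⟨⟨ha, e⟩, hb, e'⟩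
        exact ⟨⟨⟨ha, hb⟩, e.trans e'.symm⟩, e⟩
    · intro p hp
      have hp' := (mem_filter.1 hp).1
      exact h _ (mem_product.1 hp').1
  rw [e2]
  conv_lhs => rw [e1]
  exact sq_sum_le_card_mul_sum_sq

lemma edge_aux {G : Type} [Fintype G] [AddCommGroup G] (H K : AddSubgroup G) (X0 U : Finset G)
    (hX : RectFree H K X0) (W : Finset (G × G))
    (hW : W = (U ×ˢ X0).filter (fun p => p.1 - p.2 ∈ K)) :
    W.card ^ 2 * Nat.card H ≤ Fintype.card G * Nat.card K *
      (3 * ((U ×ˢ U).filter (fun p => RAdj H K X0 p.1 p.2)).card + W.card) := by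
  set E := (U ×ˢ U).filter (fun p => RAdj H K X0 p.1 p.2) with hE
  let φ : G × G → (G ⧸ H) × G := fun p => ((p.1 : G ⧸ H), p.1 - p.2)
  let Kf : Finset G := univ.filter (fun x => x ∈ K)
  have hKf : Kf.card = Nat.card K := by
    rw [Nat.card_eq_fintype_card]
    exact (Fintype.card_of_subtype Kf (by simp [Kf])).symm
  have hcs := cs_aux W ((univ : Finset (G ⧸ H)) ×ˢ Kf) φ (by
    intro w hw
    rw [hW, mem_filter] at hw
    simp [φ, Kf, hw.2])
  set Q := (W ×ˢ W).filter (fun p => φ p.1 = φ p.2) with hQ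
  have hQs : Q.card = (Q.filter (fun p => p.1.1 = p.2.1)).card
      + (Q.filter (fun p => ¬ p.1.1 = p.2.1)).card := (card_filter_add_card_filter_not _).symm
  have hφ : ∀ p ∈ Q, p.1 ∈ W ∧ p.2 ∈ W ∧ p.1.1 - p.2.1 ∈ H ∧ p.1.1 - p.1.2 = p.2.1 - p.2.2 := by
    intro p hp
    rw [hQ, mem_filter, mem_product] at hp
    obtain ⟨⟨h1, h2⟩, h3⟩ := hp
    simp only [φ, Prod.mk.injEq] at h3
    refine ⟨h1, h2, ?_, h3.2⟩
    have := QuotientAddGroup.eq.1 h3.1.symm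
    rwa [neg_add_eq_sub] at this
  have hQ1 : (Q.filter (fun p => p.1.1 = p.2.1)).card ≤ W.card := by
    apply card_le_card_of_injOn (fun p => p.1)
    · intro p hp
      exact (hφ p (mem_filter.1 hp).1).1
    · rintro ⟨⟨a, b⟩, c, d⟩ hp ⟨⟨a', b'⟩, c', d'⟩ hp' e
      have hp := mem_filter.1 hp
      have hp' := mem_filter.1 hp'
      have q := (hφ _ hp.1).2.2.2
      have q' := (hφ _ hp'.1).2.2.2
      have r := hp.2
      have r' := hp'.2
      simp only [Prod.mk.injEq] at e q q' r r' ⊢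
      obtain ⟨rfl, rfl⟩ := e
      subst r
      subst r'
      simp at q q'
      simp [← q, ← q']
  have hQ2 : (Q.filter (fun p => ¬ p.1.1 = p.2.1)).card ≤ 3 * E.card := by
    apply card_le_mul_card_image_of_maps_to (f := fun p => (p.1.1, p.2.1))
    · intro p hp
      have hp := mem_filter.1 hp
      obtain ⟨h1, h2, h3, h4⟩ := hφ p hp.1
      rw [hW, mem_filter, mem_product] at h1 h2
      simp only [hE, mem_filter, mem_product]
      exact ⟨⟨h1.1.1, h2.1.1⟩, hp.2, h3, _, h1.1.2, _, h2.1.2, h4, h1.2⟩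
    · rintro ⟨x, y⟩ hxy
      simp only [hE, mem_filter] at hxy
      refine le_trans ?_ (mult_aux H K X0 hX x y hxy.2.1 hxy.2.2.1)
      apply card_le_card_of_injOn (fun p => p.2.2)
      · intro p hp
        have hp := mem_filter.1 hp
        have hp1 := mem_filter.1 hp.1
        obtain ⟨h1, h2, h3, h4⟩ := hφ p hp1.1
        rw [hW, mem_filter, mem_product] at h1 h2
        have e := hp.2
        simp only [Prod.mk.injEq] at e
        obtain ⟨rfl, rfl⟩ := e
        have : p.2.2 + (p.1.1 - p.2.1) = p.1.2 := by
          have : p.1.2 = p.1.1 - (p.1.1 - p.1.2) := by abel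
          rw [this, h4]; abel
        apply mem_filter.2
        refine ⟨h2.1.2, ?_, h2.2⟩
        dsimp only
        rw [this]
        exact h1.1.2
      · rintro ⟨⟨a, b⟩, c, d⟩ hp ⟨⟨a', b'⟩, c', d'⟩ hp' e
        have hp := mem_filter.1 hp
        have hp' := mem_filter.1 hp'
        have q := (hφ _ (mem_filter.1 hp.1).1).2.2.2
        have q' := (hφ _ (mem_filter.1 hp'.1).1).2.2.2
        have r := hp.2
        have r' := hp'.2
        simp only [Prod.mk.injEq] at e q q' r r' ⊢
        obtain ⟨rfl, rfl⟩ := r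
        obtain ⟨rfl, rfl⟩ := r'
        subst e
        rw [← q'] at q
        simp at q
        simp [q]
  have hcard : Fintype.card G = Fintype.card (G ⧸ H) * Nat.card H := by
    have := AddSubgroup.card_eq_card_quotient_mul_card_addSubgroup H
    rwa [Nat.card_eq_fintype_card, Nat.card_eq_fintype_card] at this
  rw [card_product, card_univ, hKf] at hcs
  rw [hcard]
  calc W.card ^ 2 * Nat.card H ≤ (Fintype.card (G ⧸ H) * Nat.card K * Q.card) * Nat.card H :=
        Nat.mul_le_mul_right _ (by convert hcs)
    _ = Fintype.card (G ⧸ H) * Nat.card H * Nat.card K * Q.card := by ring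
    _ ≤ _ := Nat.mul_le_mul_left _ (by omega)

lemma sel_aux {G : Type} [Fintype G] [AddCommGroup G] (K : AddSubgroup G) (X : Finset G) (s : ℕ) :
    ∃ X0 ⊆ X, X0.card * Nat.card K ≤ s * Fintype.card G ∧
      ∀ x ∈ X \ X0, s ≤ (X0.filter (fun c => x - c ∈ K)).card := by
  have h : ∀ q : G ⧸ K, ∃ g : Finset G, g ⊆ X.filter (fun x : G => (x : G ⧸ K) = q) ∧
      g.card = min s (X.filter (fun x : G => (x : G ⧸ K) = q)).card :=
    fun q => exists_subset_card_eq (min_le_right _ _)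
  choose g hg hgc using h
  refine ⟨univ.biUnion g, ?_, ?_, ?_⟩
  · intro x hx
    obtain ⟨q, _, hq⟩ := mem_biUnion.1 hx
    exact (mem_filter.1 (hg q hq)).1
  · have h1 : (univ.biUnion g).card ≤ Fintype.card (G ⧸ K) * s :=
      card_biUnion_le_card_mul _ _ _ (fun q _ => by rw [hgc]; exact min_le_left _ _)
    have hcard : Fintype.card G = Fintype.card (G ⧸ K) * Nat.card K := by
      have := AddSubgroup.card_eq_card_quotient_mul_card_addSubgroup K
      rwa [Nat.card_eq_fintype_card, Nat.card_eq_fintype_card] at this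
    rw [hcard]
    calc _ ≤ Fintype.card (G ⧸ K) * s * Nat.card K := Nat.mul_le_mul_right _ h1
      _ = _ := by ring
  · intro x hx
    replace hx := Finset.mem_sdiff.1 hx
    have hs : s ≤ (g (x : G ⧸ K)).card := by
      by_contra hcon
      have e := hgc (x : G ⧸ K)
      have e2 : (g (x : G ⧸ K)).card = (X.filter (fun y : G => (y : G ⧸ K) = (x : G ⧸ K))).card := by
        omega
      have e3 := eq_of_subset_of_card_le (hg (x : G ⧸ K)) e2.ge
      apply hx.2
      refine mem_biUnion.2 ⟨(x : G ⧸ K), mem_univ _, ?_⟩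
      rw [e3]
      simp [hx.1]
    refine hs.trans (card_le_card ?_)
    intro c hc
    refine mem_filter.2 ⟨mem_biUnion.2 ⟨_, mem_univ _, hc⟩, ?_⟩
    have := (mem_filter.1 (hg _ hc)).2
    have := QuotientAddGroup.eq.1 this
    rwa [neg_add_eq_sub] at this

lemma deg_aux {G : Type} [Fintype G] [AddCommGroup G] (H K : AddSubgroup G) (X0 U : Finset G)
    (hX : RectFree H K X0) (s : ℕ) (δ : ℝ)
    (hU : ∀ x ∈ U, s ≤ (X0.filter (fun c => x - c ∈ K)).card)
    (hs : 2 * (Nat.card K : ℝ) ≤ s * δ * Nat.card H) (hUc : δ * Fintype.card G < U.card)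
    (hU0 : 0 < U.card) :
    ∃ v ∈ U, (s:ℝ)^2 * δ * Nat.card H / (6 * Nat.card K) ≤
      ((U.filter (fun w => RAdj H K X0 v w)).card : ℝ) := by
  set W := (U ×ˢ X0).filter (fun p => p.1 - p.2 ∈ K) with hW
  have he := edge_aux H K X0 U hX W hW
  set E := (U ×ˢ U).filter (fun p => RAdj H K X0 p.1 p.2) with hE
  have hWc : U.card * s ≤ W.card := by
    have : W.card = ∑ x ∈ U, (X0.filter (fun c => x - c ∈ K)).card := by
      rw [hW, card_filter, sum_product]
      apply sum_congr rfl
      intro x _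
      rw [card_filter]
    rw [this, ← smul_eq_mul]
    exact card_nsmul_le_sum _ _ _ hU
  have hEc : E.card = ∑ x ∈ U, (U.filter (fun w => RAdj H K X0 x w)).card := by
    rw [hE, card_filter, sum_product]
    apply sum_congr rfl
    intro x _
    rw [card_filter]
  have hN : (0:ℝ) < Fintype.card G := by
    have : 0 < Fintype.card G := Fintype.card_pos
    exact_mod_cast this
  have hk : (0:ℝ) < Nat.card K := by
    have : 0 < Nat.card K := Nat.card_pos
    exact_mod_cast this
  have hh : (0:ℝ) < Nat.card H := by
    have : 0 < Nat.card H := Nat.card_pos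
    exact_mod_cast this
  have hu : (0:ℝ) < U.card := by exact_mod_cast hU0
  have he' : (W.card:ℝ)^2 * Nat.card H ≤ Fintype.card G * Nat.card K * (3 * E.card + W.card) := by
    exact_mod_cast he
  have hWc' : (U.card:ℝ) * s ≤ W.card := by exact_mod_cast hWc
  have hEc' : (E.card:ℝ) = ∑ x ∈ U, ((U.filter (fun w => RAdj H K X0 x w)).card : ℝ) := by
    exact_mod_cast hEc
  have hs0 : (0:ℝ) ≤ s := by positivity
  generalize (Nat.card K : ℝ) = k at *
  generalize (Nat.card H : ℝ) = h at *
  generalize (Fintype.card G : ℝ) = N at *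
  generalize (W.card : ℝ) = w at *
  generalize (E.card : ℝ) = e at *
  have hspos : 0 < (s:ℝ) := by
    rcases hs0.lt_or_eq with h' | h'
    · exact h'
    · rw [← h'] at hs; linarith
  have hw0 : 0 < w := lt_of_lt_of_le (by positivity) hWc'
  -- N k ≤ w h / 2
  have a1 : 2 * (N * k) ≤ w * h := by
    calc 2 * (N * k) = N * (2 * k) := by ring
      _ ≤ N * (s * δ * h) := by gcongr
      _ = (δ * N) * s * h := by ring
      _ ≤ U.card * s * h := by gcongr
      _ ≤ w * h := by gcongr
  have a2 : w^2 * h ≤ 6 * (N * k * e) := by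
    have : N * k * w ≤ w * h / 2 * w := by gcongr; linarith
    nlinarith
  have a3 : (U.card * s)^2 * h ≤ 6 * (N * k * e) := by
    refine le_trans ?_ a2
    gcongr
  have a4 : U.card * ((s:ℝ)^2 * δ * h / (6 * k)) ≤ e := by
    have e1 : U.card * ((s:ℝ)^2 * δ * h / (6 * k)) = U.card * ((s:ℝ)^2 * δ * h) / (6 * k) := by ring
    rw [e1, div_le_iff₀ (by positivity)]
    have : N * (U.card * ((s:ℝ)^2 * δ * h)) ≤ N * (e * (6 * k)) := by
      calc N * (U.card * ((s:ℝ)^2 * δ * h)) = (δ * N) * (U.card * ((s:ℝ)^2 * h)) := by ring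
        _ ≤ U.card * (U.card * ((s:ℝ)^2 * h)) := by gcongr
        _ = (U.card * s)^2 * h := by ring
        _ ≤ _ := a3
        _ = _ := by ring
    exact le_of_mul_le_mul_left this hN
  apply exists_le_of_sum_le (card_pos.1 hU0)
  rw [← hEc', sum_const, nsmul_eq_mul]
  exact a4

lemma cont_aux {G : Type} [Fintype G] [AddCommGroup G] (H K : AddSubgroup G) (s p : ℕ) (δ : ℝ)
    (hs : 2 * (Nat.card K : ℝ) ≤ s * δ * Nat.card H)
    (hp : s * Fintype.card G ≤ p * Nat.card K)
    (hpd : (Fintype.card G : ℝ) ≤ p * ((s:ℝ)^2 * δ * Nat.card H / (6 * Nat.card K))) :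
    ∃ F : Finset G → Finset G → Finset G, (∀ A B, (F A B).card ≤ ⌊δ * Fintype.card G⌋₊) ∧
      ∀ X, RectFree H K X → ∃ A ⊆ X, ∃ B ⊆ X, A.card ≤ p ∧ B.card ≤ p ∧ X ⊆ A ∪ B ∪ F A B := by
  have key : ∀ X0 : Finset G, ∃ f : Finset G → Finset G,
      (∀ T, (f T).card ≤ ⌊δ * Fintype.card G⌋₊) ∧ (RectFree H K X0 →
        ∀ I : Finset G, (∀ x ∈ I, s ≤ (X0.filter (fun c => x - c ∈ K)).card) →
          (∀ x ∈ I, ∀ y ∈ I, ¬ RAdj H K X0 x y) → ∃ T ⊆ I, T.card ≤ p ∧ I ⊆ T ∪ f T) := by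
    intro X0
    by_cases hX0 : RectFree H K X0
    · obtain ⟨f, hf1, hf2⟩ := kw_aux (RAdj H K X0) ⌊δ * Fintype.card G⌋₊
        ((s:ℝ)^2 * δ * Nat.card H / (6 * Nat.card K))
        (univ.filter (fun x => s ≤ (X0.filter (fun c => x - c ∈ K)).card)) (by
          intro U hU hc
          apply deg_aux H K X0 U hX0 s δ _ hs _ (by omega)
          · intro x hx
            exact (mem_filter.1 (hU hx)).2
          · exact Nat.lt_of_floor_lt hc) _ _ (Finset.Subset.refl _) le_rfl p (le_trans (by
            exact_mod_cast card_le_univ _) hpd)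
      refine ⟨f, hf1, fun _ I hI hind => hf2 I ?_ hind⟩
      intro x hx
      simpa using hI x hx
    · exact ⟨fun _ => ∅, by simp, fun h => absurd h hX0⟩
  choose F hF1 hF2 using key
  refine ⟨F, hF1, ?_⟩
  intro X hX
  obtain ⟨X0, h0, hc, hsel⟩ := sel_aux K X s
  have hX0 : RectFree H K X0 := fun x a b h1 h2 h3 h4 h5 h6 h7 h8 h9 h10 =>
    hX x a b h1 h2 h3 h4 h5 h6 (h0 h7) (h0 h8) (h0 h9) (h0 h10)
  obtain ⟨T, hT, hTc, hsub⟩ := hF2 X0 hX0 (X \ X0) hsel (indep_aux H K X X0 hX h0)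
  refine ⟨X0, h0, T, hT.trans sdiff_subset, ?_, hTc, ?_⟩
  · exact Nat.le_of_mul_le_mul_right (hc.trans hp) Nat.card_pos
  · intro x hx
    by_cases hx0 : x ∈ X0
    · simp [hx0]
    · have := hsub (Finset.mem_sdiff.2 ⟨hx, hx0⟩)
      simp only [mem_union] at this ⊢
      tauto

lemma arith_aux (N h k u δ : ℝ) (L t p s : ℕ) (hN : 0 < N) (hk : 0 < k)
    (hδ0 : 0 < δ) (hδ1 : δ < 1) (hu : 0 < u) (huh : u ≤ h) (huk : u ≤ k) (hhN : h ≤ N)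
    (hu3 : u^3 ≤ h * k) (hL : 1 ≤ L) (ht : 16 * L * N < t * δ * u)
    (hp : p = t / (2 * L)) (hs1 : (s:ℝ) * N ≤ p * k) (hs2 : (p:ℝ) * k < (s+1) * N) :
    2 * k ≤ s * δ * h ∧ N ≤ p * ((s:ℝ)^2 * δ * h / (6 * k)) := by
  have hL' : (1:ℝ) ≤ L := by exact_mod_cast hL
  have ht0 : (0:ℝ) ≤ t := by positivity
  have htL : 2 * L ≤ t := by
    have a : (16:ℝ) * L * N < t * N := by
      refine ht.trans_le ?_
      calc t * δ * u ≤ t * 1 * N := by gcongr; linarith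
        _ = _ := by ring
    have b : (16:ℝ) * L < t := lt_of_mul_lt_mul_right a hN.le
    have c : 16 * L < t := by exact_mod_cast b
    omega
  have hp1 : 1 ≤ p := by
    rw [hp]; exact (Nat.one_le_div_iff (by omega)).2 htL
  have htp : t ≤ 4 * L * p := by
    have := Nat.lt_mul_div_succ t (show 0 < 2 * L by omega)
    rw [← hp] at this
    nlinarith
  have htp' : (t:ℝ) ≤ 4 * L * p := by exact_mod_cast htp
  have hpu : 4 * N ≤ p * δ * u := by
    have : 4 * (L:ℝ) * (4 * N) ≤ 4 * L * (p * δ * u) := by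
      calc 4 * (L:ℝ) * (4 * N) = 16 * L * N := by ring
        _ ≤ t * δ * u := ht.le
        _ ≤ (4 * L * p) * δ * u := by gcongr
        _ = _ := by ring
    exact le_of_mul_le_mul_left this (by positivity)
  have hp0 : (0:ℝ) < p := by exact_mod_cast hp1
  have hpk : 4 * N ≤ p * k := by
    refine hpu.trans ?_
    calc p * δ * u ≤ p * 1 * k := by gcongr
      _ = _ := by ring
  have hs3 : (p:ℝ) * k ≤ 2 * (s * N) := by nlinarith
  constructor
  · have : N * (2 * k) ≤ N * (s * δ * h) := by
      have e1 : 4 * N * k ≤ p * δ * h * k := by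
        refine le_trans (mul_le_mul_of_nonneg_right hpu hk.le) ?_
        gcongr
      have e2 : (p * k) * (δ * h) ≤ 2 * (s * N) * (δ * h) :=
        mul_le_mul_of_nonneg_right hs3 (mul_nonneg hδ0.le (hu.le.trans huh))
      nlinarith
    exact le_of_mul_le_mul_left this hN
  · have h0 : 0 < h := hu.trans_le huh
    have e0 : p * ((s:ℝ)^2 * δ * h / (6 * k)) = p * ((s:ℝ)^2 * δ * h) / (6 * k) := by ring
    rw [e0, le_div_iff₀ (by positivity)]
    have : (4 * N^2) * (N * (6 * k)) ≤ (4 * N^2) * (p * ((s:ℝ)^2 * δ * h)) := by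
      calc (4 * N^2) * (N * (6 * k)) = 24 * (k * N^3) := by ring
        _ ≤ 64 * (k * N^3) := by gcongr; norm_num
        _ = k * (4 * N)^3 := by ring
        _ ≤ k * (p * δ * u)^3 := by gcongr
        _ = k * p^3 * δ^3 * u^3 := by ring
        _ ≤ k * p^3 * δ * (h * k) := by
          have : δ^3 ≤ δ := pow_le_of_le_one hδ0.le hδ1.le (by norm_num)
          gcongr
        _ = p * (p * k)^2 * δ * h := by ring
        _ ≤ p * (2 * (s * N))^2 * δ * h := by gcongr
        _ = _ := by ring
    exact le_of_mul_le_mul_left this (by positivity)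

lemma card_aux {G : Type} [Fintype G] [AddCommGroup G] (H K : AddSubgroup G)
    (S : Finset (Fin 4 → G))
    (hS : ∀ (x : Fin 4 → G), x ∈ S ↔
      ∃ a ∈ H, ∃ b ∈ K, x 1 = x 0 + a ∧ x 2 = x 0 + b ∧ x 3 = x 0 + a + b) :
    (distinctPart S).card ≤ Fintype.card G * (Nat.card H * Nat.card K) := by
  refine (card_le_card (filter_subset _ _)).trans ?_
  have hc : ∀ J : AddSubgroup G, ((univ : Finset G).filter (fun x => x ∈ J)).card = Nat.card J := by
    intro J
    rw [Nat.card_eq_fintype_card]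
    exact (Fintype.card_of_subtype _ (by simp)).symm
  rw [← hc H, ← hc K, ← card_univ, ← card_product, ← card_product]
  apply card_le_card_of_injOn (fun x => (x 0, x 1 - x 0, x 2 - x 0))
  · intro x hx
    obtain ⟨a, ha, b, hb, h1, h2, h3⟩ := (hS x).1 hx
    simp [h1, h2, ha, hb]
  · intro x hx y hy e
    obtain ⟨a, ha, b, hb, h1, h2, h3⟩ := (hS x).1 hx
    obtain ⟨a', ha', b', hb', h1', h2', h3'⟩ := (hS y).1 hy
    simp only [Prod.mk.injEq, h1, h2, h1', h2', add_sub_cancel_left] at e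
    obtain ⟨e0, rfl, rfl⟩ := e
    funext j
    fin_cases j
    · exact e0
    · simp [h1, h1', e0]
    · simp [h2, h2', e0]
    · simp [h3, h3', e0]

lemma free_aux {G : Type} [Fintype G] [AddCommGroup G] (H K : AddSubgroup G)
    (S : Finset (Fin 4 → G))
    (hS : ∀ (x : Fin 4 → G), x ∈ S ↔
      ∃ a ∈ H, ∃ b ∈ K, x 1 = x 0 + a ∧ x 2 = x 0 + b ∧ x 3 = x 0 + a + b)
    (X : Finset G) (hX : ∀ x ∈ distinctPart S, ¬ (∀ j, x j ∈ X)) : RectFree H K X := by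
  intro x a b ha hb ha0 hb0 hab hab' h0 h1 h2 h3
  refine hX ![x, x + a, x + b, x + a + b] ?_ ?_
  · refine mem_filter.2 ⟨(hS _).2 ⟨a, ha, b, hb, rfl, rfl, rfl⟩, ?_⟩
    have q1 : x ≠ x + a := by simpa using ha0
    have q2 : x ≠ x + b := by simpa using hb0
    have q3 : x ≠ x + a + b := by
      rw [add_assoc]; simpa using hab'
    have q4 : x + a ≠ x + b := by simpa using hab
    have q5 : x + a ≠ x + a + b := by simpa using hb0
    have q6 : x + b ≠ x + a + b := by
      rw [add_right_comm]; simpa using ha0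
    intro i j hij
    fin_cases i <;> fin_cases j <;> first | rfl | (exfalso; simp at hij; done) | (exfalso; first | exact q1 hij | exact q2 hij | exact q3 hij | exact q4 hij | exact q5 hij | exact q6 hij | exact q1 hij.symm | exact q2 hij.symm | exact q3 hij.symm | exact q4 hij.symm | exact q5 hij.symm | exact q6 hij.symm)
  · intro j
    fin_cases j
    · exact h0
    · exact h1
    · exact h2
    · exact h3

/-- counting rectangle-free sets in abelian groups. -/
theorem stmt0
    (G : ℕ → Type) [∀ i, Fintype (G i)] [∀ i, AddCommGroup (G i)]
    (H K : ∀ i, AddSubgroup (G i))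
    (hH : Tendsto (fun i => (Nat.card ↥(H i) : ℝ)) atTop atTop)
    (hK : Tendsto (fun i => (Nat.card ↥(K i) : ℝ)) atTop atTop)
    (hG : Tendsto (fun i => (Fintype.card (G i) : ℝ)) atTop atTop)
    (S : ∀ i, Finset (Fin 4 → G i))
    (hS : ∀ i (x : Fin 4 → G i), x ∈ S i ↔
      ∃ a ∈ H i, ∃ b ∈ K i, x 1 = x 0 + a ∧ x 2 = x 0 + b ∧ x 3 = x 0 + a + b)
    (hmax : ∀ i, (max (Nat.card ↥(H i)) (Nat.card ↥(K i)) : ℝ) ≤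
      (((distinctPart (S i)).card : ℝ) / (Fintype.card (G i) : ℝ)) ^ ((2:ℝ)/3))
    (δ : ℝ) (hδ0 : 0 < δ) (hδ1 : δ < 1/40) :
    ∃ C : ℝ, 0 < C ∧ ∃ i₀ : ℕ, ∀ i, i₀ ≤ i → ∀ t : ℕ,
      (C/δ) * ((Fintype.card (G i) : ℝ)^4 / ((distinctPart (S i)).card : ℝ)) ^ ((1:ℝ)/3)
          < (t : ℝ) →
      ((Finset.univ.filter (fun X : Finset (G i) =>
          X.card = t ∧ ∀ x ∈ distinctPart (S i), ¬ (∀ j, x j ∈ X))).card : ℝ)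
        ≤ (Nat.choose ⌊2 * δ * (Fintype.card (G i) : ℝ)⌋₊ t : ℝ) := by
  obtain ⟨L0, hL0⟩ := pow_unbounded_of_one_lt (60 * (2/δ)) (show (1:ℝ) < 15/11 by norm_num)
  set L := L0 + 4 with hLdef
  have hRL : 60 * (2/δ) ≤ (15/11:ℝ)^L :=
    hL0.le.trans (pow_le_pow_right₀ (by norm_num) (by omega))
  have hL1 : (0:ℝ) < L := by
    have : 0 < L := by omega
    exact_mod_cast this
  obtain ⟨i₀, hi₀⟩ := eventually_atTop.1 (hG.eventually_ge_atTop (2/δ))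
  refine ⟨16 * L, by positivity, i₀, ?_⟩
  intro i hi t ht
  have hNδ := hi₀ i hi
  have hmaxi := hmax i
  have hcard := card_aux (H i) (K i) (S i) (hS i)
  have hN0 : 0 < Fintype.card (G i) := Fintype.card_pos
  have hh0 : 0 < Nat.card (H i) := Nat.card_pos
  have hk0 : 0 < Nat.card (K i) := Nat.card_pos
  have hhN0 : Nat.card (H i) ≤ Fintype.card (G i) := by
    rw [← Nat.card_eq_fintype_card]
    exact Nat.card_le_card_of_injective _ (H i).subtype_injective
  set N : ℝ := (Fintype.card (G i) : ℝ) with hN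
  set h : ℝ := (Nat.card (H i) : ℝ) with hh
  set k : ℝ := (Nat.card (K i) : ℝ) with hk
  set c : ℝ := ((distinctPart (S i)).card : ℝ) with hc
  have hN' : 0 < N := by rw [hN]; exact_mod_cast hN0
  have hh' : 0 < h := by rw [hh]; exact_mod_cast hh0
  have hk' : 0 < k := by rw [hk]; exact_mod_cast hk0
  have hhN : h ≤ N := by rw [hh, hN]; exact_mod_cast hhN0
  have hcard' : c ≤ N * (h * k) := by rw [hc, hN, hh, hk]; exact_mod_cast hcard
  have hc0 : 0 ≤ c := by rw [hc]; positivity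
  have hcpos : 0 < c := by
    rcases hc0.lt_or_eq with h' | h'
    · exact h'
    · rw [← h', zero_div, Real.zero_rpow (by norm_num)] at hmaxi
      have := (le_max_left _ _).trans hmaxi
      linarith
  have hcN : 0 < c / N := by positivity
  set u : ℝ := (c / N) ^ ((1:ℝ)/3) with hu
  have hu0 : 0 < u := Real.rpow_pos_of_pos hcN _
  have hu3 : u^3 = c / N := by
    rw [hu, ← Real.rpow_natCast, ← Real.rpow_mul hcN.le]; norm_num
  have hu2 : (c / N) ^ ((2:ℝ)/3) = u^2 := by
    rw [hu, ← Real.rpow_natCast, ← Real.rpow_mul hcN.le]; norm_num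
  rw [hu2] at hmaxi
  have hhu : h ≤ u^2 := (le_max_left _ _).trans hmaxi
  have hku : k ≤ u^2 := (le_max_right _ _).trans hmaxi
  have hu3' : u^3 ≤ h * k := by
    rw [hu3, div_le_iff₀ hN']; linarith
  have huh : u ≤ h := by
    have : u^2 * u ≤ u^2 * h := by nlinarith
    exact le_of_mul_le_mul_left this (by positivity)
  have huk : u ≤ k := by
    have : u^2 * u ≤ u^2 * k := by nlinarith
    exact le_of_mul_le_mul_left this (by positivity)
  have hy : (N^4 / c) ^ ((1:ℝ)/3) = N / u := by
    have e : N^4 / c = (N / u)^3 := by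
      rw [div_pow, hu3]; field_simp
    rw [e, ← Real.rpow_natCast, ← Real.rpow_mul (by positivity)]; norm_num
  rw [hy] at ht
  have ht' : 16 * L * N < t * δ * u := by
    have e : 16 * (L:ℝ) / δ * (N / u) = 16 * L * N / (δ * u) := by field_simp
    rw [e, div_lt_iff₀ (by positivity)] at ht
    linarith
  set p := t / (2 * L) with hp
  set s := (p * Nat.card (K i)) / Fintype.card (G i) with hs
  have hs1 : s * Fintype.card (G i) ≤ p * Nat.card (K i) := Nat.div_mul_le_self _ _
  have hs2 : p * Nat.card (K i) < (s + 1) * Fintype.card (G i) := by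
    rw [mul_comm (s+1)]
    exact Nat.lt_mul_div_succ _ hN0
  obtain ⟨r1, r2⟩ := arith_aux N h k u δ L t p s hN' hk' hδ0 (by linarith) hu0 huh huk hhN hu3'
    (by omega) ht' hp (by rw [hN, hk]; exact_mod_cast hs1) (by rw [hN, hk]; exact_mod_cast hs2)
  obtain ⟨F, hF1, hF2⟩ := cont_aux (H i) (K i) s p δ r1 hs1 r2
  have hLp : L * (2 * p) ≤ t := by
    have := Nat.div_mul_le_self t (2 * L)
    rw [← hp] at this
    linarith
  have hcount := count_aux (Finset.univ.filter (fun X : Finset (G i) =>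
          X.card = t ∧ ∀ x ∈ distinctPart (S i), ¬ (∀ j, x j ∈ X))) F ⌊δ * N⌋₊ p t hF1
      (le_trans (Nat.le_mul_of_pos_left _ (by omega)) hLp) (by
    intro X hX
    have hX := (mem_filter.1 hX).2
    exact ⟨hX.1, hF2 X (free_aux (H i) (K i) (S i) (hS i) X hX.2)⟩)
  have hδN : 2 ≤ δ * N := by
    rw [div_le_iff₀ hδ0] at hNδ
    linarith
  have hb := binom_aux (Fintype.card (G i)) ⌊2 * δ * N⌋₊ ⌊δ * N⌋₊ t (2 * p) L (2/δ)
    (by positivity) (by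
      apply Nat.le_floor
      push_cast
      have := Nat.floor_le (show 0 ≤ δ * N by positivity)
      linarith) (by omega) hLp (by
      have := Nat.lt_floor_add_one (δ * N)
      rw [div_mul_eq_mul_div, le_div_iff₀ hδ0, ← hN]
      linarith) hRL
  refine le_trans ?_ hb
  exact_mod_cast hcount
end

section
/- Let k ≥ 2 be an integer and δ ∈ (0,1), and let {(S_i,G_i)}_{i≥1} be a normal sequence of systems of configurations of degree k arising from invariant group homomorphisms M_i : G_i^k → G_i^k on finite abelian groups G_i, with S_i = M_i^{-1}(0). Set p_i = max over ℓ ∈ {2,…,k} of (α_ℓ^k(S_i,G_i)/α_1^k(S_i,G_i))^{1/(ℓ−1)}. Then there exist constants c₁, c₂ > 0, depending only on δ, k and the sequence, such that for every sequence p(i) ∈ [0,1]: if p(i) ≥ c₁·p_i for all i, then P_{p(i)}({A ⊆ G_i : A is (δ,S_i)_k-stable}) → 1 as i → ∞; and if p(i) < c₂·p_i for all i, then P_{p(i)}({A ⊆ G_i : A is (δ,S_i)_k-stable}) → 0 as i → ∞. -/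
open Finset Filter Topology

attribute [local instance] Classical.propDecidable

/-- The restricted `ℓ`-th degree of freedom `α_ℓ^k(S,G)`. -/
noncomputable def alphaR {k : ℕ} {G : Type} [Fintype G] (S : Finset (Fin k → G)) (ℓ : ℕ) : ℕ :=
  (Finset.univ.filter fun U : Finset (Fin k) => U.card = ℓ).sup fun U =>
    Finset.univ.sup fun g : Fin k → G =>
      ((distinctPart S).filter fun x => ∀ j ∈ U, x j = g j).card

/-- Probability assigned to a family `E` of subsets of `G` by the binomial random subset
`[G]_p`. -/
noncomputable def binomProb {G : Type} [Fintype G] (p : ℝ) (E : Finset (Finset G)) : ℝ :=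
  ∑ A ∈ E, p ^ A.card * (1 - p) ^ (Fintype.card G - A.card)

/-- `X` is `(δ,S)_k`-stable: every `X' ⊆ X` with `|X'| ≥ δ|X|` contains a tuple of `S` and
moreover a tuple of `S^{(k)}`. -/
def StableK {k : ℕ} {G : Type} (δ : ℝ) (S : Finset (Fin k → G)) (X : Finset G) : Prop :=
  ∀ X' ⊆ X, δ * (X.card : ℝ) ≤ (X'.card : ℝ) →
    (∃ x ∈ S, ∀ j, x j ∈ X') ∧ (∃ x ∈ distinctPart S, ∀ j, x j ∈ X')

/-- The threshold quantity `max_{2 ≤ ℓ ≤ k} (α_ℓ^k / α_1^k)^{1/(ℓ-1)}`. -/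
noncomputable def pMax {k : ℕ} {G : Type} [Fintype G] (S : Finset (Fin k → G)) : ℝ :=
  sSup {x : ℝ | ∃ ℓ : ℕ, 2 ≤ ℓ ∧ ℓ ≤ k ∧
    x = ((alphaR S ℓ : ℝ) / (alphaR S 1 : ℝ)) ^ (1 / ((ℓ:ℝ) - 1))}

/-- A sequence of configuration systems of degree `k` is normal with function `γ`. -/
def NormalSeq (k : ℕ) (G : ℕ → Type) [∀ i, Fintype (G i)]
    (S : ∀ i, Finset (Fin k → G i)) (γ : ℝ → ℝ) : Prop :=
  Tendsto (fun i => (Fintype.card (G i) : ℝ)) atTop atTop ∧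
  Tendsto (fun i => (Fintype.card (G i) : ℝ) / ((S i).card : ℝ)) atTop (nhds 0) ∧
  Tendsto (fun i => (Fintype.card (G i) : ℝ) ^ k / ((S i).card : ℝ)) atTop atTop ∧
  Tendsto (fun i => ((distinctPart (S i)).card : ℝ) / ((S i).card : ℝ)) atTop (nhds 1) ∧
  (∀ ε : ℝ, 0 < ε → ε < 1 → 0 < γ ε ∧ γ ε < 1) ∧
  (∀ ε : ℝ, 0 < ε → ε < 1 → ∀ i, ∀ X : Finset (G i),
    ε * (Fintype.card (G i) : ℝ) ≤ (X.card : ℝ) →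
    γ ε * ((S i).card : ℝ) ≤ (((S i).filter (fun x => ∀ j, x j ∈ X)).card : ℝ))


section aux
variable {G : Type} [Fintype G]

lemma aux_master (p : ℝ) (a b : G → ℝ) :
    ∑ A : Finset G, (p ^ A.card * (1 - p) ^ (Fintype.card G - A.card)) *
      ((∏ v ∈ A, a v) * ∏ v ∈ Aᶜ, b v) = ∏ v, (p * a v + (1 - p) * b v) := by
  rw [Finset.prod_add, Finset.powerset_univ]
  refine Finset.sum_congr rfl fun A _ => ?_
  rw [Finset.prod_mul_distrib, Finset.prod_mul_distrib, Finset.prod_const, Finset.prod_const,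
    ← Finset.compl_eq_univ_sdiff, Finset.card_compl]
  ring

lemma aux_bp_le {p : ℝ} (h0 : 0 ≤ p) (h1 : p ≤ 1) (E : Finset (Finset G)) (c : ℝ) (hc : 0 ≤ c)
    (a b : G → ℝ) (ha : ∀ v, 0 ≤ a v) (hb : ∀ v, 0 ≤ b v)
    (hE : ∀ A ∈ E, 1 ≤ c * ((∏ v ∈ A, a v) * ∏ v ∈ Aᶜ, b v)) :
    binomProb p E ≤ c * ∏ v, (p * a v + (1 - p) * b v) := by
  rw [← aux_master, Finset.mul_sum]
  have h1' : 0 ≤ 1 - p := by linarith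
  unfold binomProb
  calc _ ≤ ∑ A ∈ E, c * ((p ^ A.card * (1 - p) ^ (Fintype.card G - A.card)) *
      ((∏ v ∈ A, a v) * ∏ v ∈ Aᶜ, b v)) := by
        refine Finset.sum_le_sum fun A hA => ?_
        have := hE A hA
        have h2 : 0 ≤ p ^ A.card * (1 - p) ^ (Fintype.card G - A.card) := by positivity
        nlinarith
    _ ≤ _ := by
        refine Finset.sum_le_sum_of_subset_of_nonneg (Finset.subset_univ _) fun A _ _ => ?_
        have h3 : 0 ≤ ∏ v ∈ A, a v := Finset.prod_nonneg fun v _ => ha v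
        have h4 : 0 ≤ ∏ v ∈ Aᶜ, b v := Finset.prod_nonneg fun v _ => hb v
        positivity

lemma aux_bp_nonneg {p : ℝ} (h0 : 0 ≤ p) (h1 : p ≤ 1) (E : Finset (Finset G)) :
    0 ≤ binomProb p E := by
  have h1' : 0 ≤ 1 - p := by linarith
  exact Finset.sum_nonneg fun A _ => by positivity

lemma aux_bp_mono {p : ℝ} (h0 : 0 ≤ p) (h1 : p ≤ 1) {E E' : Finset (Finset G)} (h : E ⊆ E') :
    binomProb p E ≤ binomProb p E' := by
  have h1' : 0 ≤ 1 - p := by linarith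
  exact Finset.sum_le_sum_of_subset_of_nonneg h fun A _ _ => by positivity

lemma aux_bp_union {p : ℝ} (h0 : 0 ≤ p) (h1 : p ≤ 1) (E E' : Finset (Finset G)) :
    binomProb p (E ∪ E') ≤ binomProb p E + binomProb p E' := by
  have h := Finset.sum_union_inter (s₁ := E) (s₂ := E')
    (f := fun A : Finset G => p ^ A.card * (1 - p) ^ (Fintype.card G - A.card))
  have h2 := aux_bp_nonneg h0 h1 (E ∩ E')
  unfold binomProb at *
  linarith

lemma aux_bp_biUnion {p : ℝ} (h0 : 0 ≤ p) (h1 : p ≤ 1) {ι : Type} (s : Finset ι)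
    (E : ι → Finset (Finset G)) :
    binomProb p (s.biUnion E) ≤ ∑ j ∈ s, binomProb p (E j) := by
  induction s using Finset.induction_on with
  | empty => simp [binomProb]
  | insert a s ha ih =>
    rw [Finset.biUnion_insert, Finset.sum_insert ha]
    exact (aux_bp_union h0 h1 _ _).trans (by linarith)

lemma aux_bp_univ (p : ℝ) : binomProb p (Finset.univ : Finset (Finset G)) = 1 := by
  have := aux_master (G := G) p (fun _ => 1) (fun _ => 1)
  simpa [binomProb] using this

lemma aux_bp_leaf {p : ℝ} (h0 : 0 ≤ p) (h1 : p ≤ 1) (F A : Finset G) (hd : Disjoint F A)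
    (u : ℝ) :
    binomProb p (Finset.univ.filter fun X : Finset G => F ⊆ X ∧ u ≤ ((X ∩ A).card : ℝ)) ≤
      p ^ F.card * (Real.exp (-u) * Real.exp (2 * p * A.card)) := by
  have h1' : 0 ≤ 1 - p := by linarith
  have key := aux_bp_le h0 h1
    (Finset.univ.filter fun X : Finset G => F ⊆ X ∧ u ≤ ((X ∩ A).card : ℝ))
    (Real.exp (-u)) (Real.exp_pos _).le
    (fun v => if v ∈ A then Real.exp 1 else 1) (fun v => if v ∈ F then 0 else 1)
    (fun v => by split_ifs <;> positivity) (fun v => by split_ifs <;> positivity)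
    (by
      intro X hX
      simp only [Finset.mem_filter, Finset.mem_univ, true_and] at hX
      have e1 : ∏ v ∈ X, (if v ∈ A then Real.exp 1 else (1:ℝ)) = Real.exp ((X ∩ A).card) := by
        rw [Finset.prod_ite_mem, Finset.prod_const, ← Real.exp_nat_mul, mul_one]
      have e2 : ∏ v ∈ Xᶜ, (if v ∈ F then (0:ℝ) else 1) = 1 := by
        refine Finset.prod_eq_one fun v hv => ?_
        rw [if_neg]
        intro hvF
        exact (Finset.mem_compl.1 hv) (hX.1 hvF)
      rw [e1, e2, mul_one, ← Real.exp_add]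
      apply Real.one_le_exp
      linarith [hX.2])
  refine key.trans ?_
  have e3 : ∏ v, (p * (if v ∈ A then Real.exp 1 else 1) + (1 - p) * (if v ∈ F then (0:ℝ) else 1))
      ≤ ∏ v, ((if v ∈ F then p else 1) * (if v ∈ A then Real.exp (2 * p) else 1)) := by
    refine Finset.prod_le_prod (fun v _ => ?_) (fun v _ => ?_)
    · split_ifs <;> positivity
    · have he : Real.exp 1 ≤ 3 := by linarith [Real.exp_one_lt_d9]
      have h5 : 1 + 2 * p ≤ Real.exp (2 * p) := by linarith [Real.add_one_le_exp (2 * p)]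
      by_cases hF : v ∈ F
      · have hA : v ∉ A := Finset.disjoint_left.1 hd hF
        simp [hF, hA]
      · by_cases hA : v ∈ A
        · simp only [hF, hA, if_true, if_false]
          nlinarith
        · simp [hF, hA]
  have e4 : ∏ v, ((if v ∈ F then p else 1) * (if v ∈ A then Real.exp (2 * p) else 1))
      = p ^ F.card * Real.exp (2 * p * A.card) := by
    rw [Finset.prod_mul_distrib, Finset.prod_ite_mem, Finset.prod_ite_mem, Finset.univ_inter,
      Finset.univ_inter, Finset.prod_const, Finset.prod_const, ← Real.exp_nat_mul]
    ring_nf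
  rw [e4] at e3
  calc _ ≤ Real.exp (-u) * (p ^ F.card * Real.exp (2 * p * A.card)) :=
        mul_le_mul_of_nonneg_left e3 (Real.exp_pos _).le
    _ = _ := by ring

lemma aux_bp_sup {p : ℝ} (h0 : 0 ≤ p) (h1 : p ≤ 1) (F : Finset G) :
    binomProb p (Finset.univ.filter fun X : Finset G => F ⊆ X) ≤ p ^ F.card := by
  have := aux_bp_leaf h0 h1 F ∅ (Finset.disjoint_empty_right _) 0
  simpa using this

lemma aux_bp_small {p : ℝ} (h0 : 0 ≤ p) (h1 : p ≤ 1) :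
    binomProb p (Finset.univ.filter fun X : Finset G => (X.card : ℝ) < p * Fintype.card G / 2) ≤
      Real.exp (-(p * Fintype.card G / 8)) := by
  have h1' : 0 ≤ 1 - p := by linarith
  have key := aux_bp_le h0 h1
    (Finset.univ.filter fun X : Finset G => (X.card : ℝ) < p * Fintype.card G / 2)
    (Real.exp (p * Fintype.card G / 2)) (Real.exp_pos _).le
    (fun v => Real.exp (-1)) (fun v => 1)
    (fun v => by positivity) (fun v => by positivity)
    (by
      intro X hX
      simp only [Finset.mem_filter, Finset.mem_univ, true_and] at hX
      rw [Finset.prod_const, Finset.prod_const_one, mul_one, ← Real.exp_nat_mul, ← Real.exp_add]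
      apply Real.one_le_exp
      linarith)
  refine key.trans ?_
  rw [Finset.prod_const, Finset.card_univ]
  have he : Real.exp (-1) ≤ 3/8 := by
    have := Real.exp_neg_one_lt_d9
    linarith
  have h2 : p * Real.exp (-1) + (1 - p) * 1 ≤ Real.exp (-(5/8) * p) := by
    have := Real.add_one_le_exp (-(5/8) * p)
    nlinarith
  have h3 : 0 ≤ p * Real.exp (-1) + (1 - p) * 1 := by positivity
  calc _ ≤ Real.exp (p * Fintype.card G / 2) * (Real.exp (-(5/8) * p)) ^ Fintype.card G := by
        gcongr
    _ = _ := by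
      rw [← Real.exp_nat_mul, ← Real.exp_add]
      ring_nf

end aux

inductive AuxWin {V : Type} (bad goal : Finset V → Prop) : ℕ → Finset V → Finset V → Prop
  | done (s : ℕ) (F A : Finset V) : goal A → AuxWin bad goal s F A
  | dead (s : ℕ) (F A : Finset V) : bad F → AuxWin bad goal s F A
  | query (s : ℕ) (F A : Finset V) (v : V) : v ∈ A → AuxWin bad goal (s + 1) F (A.erase v) →
      AuxWin bad goal s (insert v F) (A.erase v) → AuxWin bad goal (s + 1) F A

lemma AuxWin.mono {V : Type} {bad g g' : Finset V → Prop} (hg : ∀ A, g A → g' A) {s : ℕ}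
    {F A : Finset V} (h : AuxWin bad g s F A) : ∀ s', s ≤ s' → AuxWin bad g' s' F A := by
  induction h with
  | done s F A h => exact fun s' _ => .done _ _ _ (hg _ h)
  | dead s F A h => exact fun s' _ => .dead _ _ _ h
  | query s F A v hv _ _ ih1 ih2 =>
    intro s' hs
    obtain ⟨t, rfl⟩ : ∃ t, s' = t + 1 := ⟨s' - 1, by omega⟩
    exact .query _ _ _ v hv (ih1 _ hs) (ih2 _ (by omega))

lemma AuxWin.chain {V : Type} {bad g g' : Finset V → Prop} {s2 : ℕ}
    (hg : ∀ F A, g A → AuxWin bad g' s2 F A) {s : ℕ}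
    {F A : Finset V} (h : AuxWin bad g s F A) : AuxWin bad g' (s + s2) F A := by
  induction h with
  | done s F A h => exact (hg F A h).mono (fun _ h => h) _ (by omega)
  | dead s F A h => exact .dead _ _ _ h
  | query s F A v hv _ _ ih1 ih2 =>
    have e : s + 1 + s2 = (s + s2) + 1 := by omega
    rw [e] at ih1 ⊢
    exact .query _ _ _ v hv ih1 ih2

lemma AuxWin.forbid {V : Type} {bad g : Finset V → Prop} (s : ℕ) (F : Finset V) (B : Finset V) :
    ∀ A : Finset V, B ⊆ A → (∀ v ∈ B, bad (insert v F)) → g (A \ B) →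
      AuxWin bad g (s + 1) F A := by
  induction B using Finset.induction_on with
  | empty =>
    intro A _ _ h
    exact .done _ _ _ (by simpa using h)
  | insert b B hb ih =>
    intro A hA hbad hg
    refine .query _ _ _ b (hA (Finset.mem_insert_self _ _)) (ih _ ?_ ?_ ?_) ?_
    · intro x hx
      refine Finset.mem_erase.2 ⟨?_, hA (Finset.mem_insert_of_mem hx)⟩
      rintro rfl; exact hb hx
    · exact fun v hv => hbad v (Finset.mem_insert_of_mem hv)
    · convert hg using 1
      ext x; simp only [Finset.mem_sdiff, Finset.mem_erase, Finset.mem_insert]; tauto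
    · exact .dead _ _ _ (hbad b (Finset.mem_insert_self _ _))

lemma AuxWin.prob {V : Type} [Fintype V] {bad g : Finset V → Prop}
    (hbad : ∀ A B : Finset V, A ⊆ B → bad A → bad B) (m t a p : ℝ) (s0 : ℕ)
    (ha : 0 ≤ a) (h0 : 0 ≤ p) (h1 : p ≤ 1)
    (hg : ∀ A, g A → (A.card : ℝ) ≤ m) {s : ℕ} {F A : Finset V} (h : AuxWin bad g s F A) :
    Disjoint F A → F.card + s ≤ s0 →
    binomProb p (Finset.univ.filter fun X : Finset V => ∃ I, I ⊆ X ∧ t ≤ (I.card : ℝ) ∧ ¬ bad I ∧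
        F ⊆ I ∧ I ⊆ F ∪ A) ≤
      p ^ F.card * (Real.exp (a * s) * Real.exp (Real.exp (-a) * p * A.card)) *
        (Real.exp (-(t - s0)) * Real.exp (2 * p * m)) := by
  have hpos : ∀ (s : ℕ) (A : Finset V),
      1 ≤ Real.exp (a * s) * Real.exp (Real.exp (-a) * p * A.card) := by
    intro s A
    rw [← Real.exp_add]
    apply Real.one_le_exp
    positivity
  induction h with
  | done s F A h =>
    intro hd hs
    have hsub : (Finset.univ.filter fun X : Finset V => ∃ I, I ⊆ X ∧ t ≤ (I.card : ℝ) ∧ ¬ bad I ∧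
        F ⊆ I ∧ I ⊆ F ∪ A) ⊆
        (Finset.univ.filter fun X : Finset V => F ⊆ X ∧ (t - s0) ≤ ((X ∩ A).card : ℝ)) := by
      intro X hX
      simp only [Finset.mem_filter, Finset.mem_univ, true_and] at hX ⊢
      obtain ⟨I, hIX, hI, _, hFI, hIA⟩ := hX
      refine ⟨hFI.trans hIX, ?_⟩
      have h3 : I ⊆ F ∪ (X ∩ A) := by
        intro x hx
        have := hIA hx
        have := hIX hx
        simp only [Finset.mem_union, Finset.mem_inter] at *
        tauto
      have h4 := (Finset.card_le_card h3).trans (Finset.card_union_le _ _)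
      have h5 : I.card ≤ s0 + (X ∩ A).card := by omega
      have h6 : (I.card : ℝ) ≤ s0 + (X ∩ A).card := by exact_mod_cast h5
      linarith
    refine (aux_bp_mono h0 h1 hsub).trans ((aux_bp_leaf h0 h1 F A hd _).trans ?_)
    have hA := hg A h
    have := hpos s A
    calc p ^ F.card * (Real.exp (-(t - s0)) * Real.exp (2 * p * A.card))
        ≤ p ^ F.card * (Real.exp (-(t - s0)) * Real.exp (2 * p * m)) := by gcongr
      _ = p ^ F.card * 1 * (Real.exp (-(t - s0)) * Real.exp (2 * p * m)) := by ring
      _ ≤ _ := by gcongr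
  | dead s F A h =>
    intro hd hs
    rw [Finset.filter_false_of_mem]
    · simp only [binomProb, Finset.sum_empty]; positivity
    · rintro X - ⟨I, _, _, hI, hFI, _⟩
      exact hI (hbad _ _ hFI h)
  | query s F A v hv _ _ ih1 ih2 =>
    intro hd hs
    have hvF : v ∉ F := fun hvF => Finset.disjoint_left.1 hd hvF hv
    have d1 : Disjoint F (A.erase v) := hd.mono_right (Finset.erase_subset _ _)
    have d2 : Disjoint (insert v F) (A.erase v) := by
      rw [Finset.disjoint_insert_left]
      exact ⟨Finset.notMem_erase _ _, d1⟩
    have c2 : (insert v F).card = F.card + 1 := Finset.card_insert_of_notMem hvF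
    have b1 := ih1 d1 hs
    have b2 := ih2 d2 (by omega)
    rw [c2] at b2
    have hA : (A.card : ℝ) = (A.erase v).card + 1 := by
      have := Finset.card_erase_add_one hv
      exact_mod_cast this.symm
    refine (aux_bp_mono h0 h1 (E' := (Finset.univ.filter fun X : Finset V => ∃ I, I ⊆ X ∧
        t ≤ (I.card : ℝ) ∧ ¬ bad I ∧ F ⊆ I ∧ I ⊆ F ∪ (A.erase v)) ∪
      (Finset.univ.filter fun X : Finset V => ∃ I, I ⊆ X ∧
        t ≤ (I.card : ℝ) ∧ ¬ bad I ∧ (insert v F) ⊆ I ∧ I ⊆ (insert v F) ∪ (A.erase v))) ?_).trans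
        ((aux_bp_union h0 h1 _ _).trans ((add_le_add b1 b2).trans ?_))
    · intro X hX
      simp only [Finset.mem_filter, Finset.mem_univ, true_and, Finset.mem_union] at hX ⊢
      obtain ⟨I, hIX, hI, hb, hFI, hIA⟩ := hX
      by_cases hvI : v ∈ I
      · right
        refine ⟨I, hIX, hI, hb, Finset.insert_subset hvI hFI, ?_⟩
        intro x hx
        have := hIA hx
        simp only [Finset.mem_union, Finset.mem_insert, Finset.mem_erase] at *
        tauto
      · left
        refine ⟨I, hIX, hI, hb, hFI, ?_⟩
        intro x hx
        have := hIA hx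
        have hne : x ≠ v := by rintro rfl; exact hvI hx
        simp only [Finset.mem_union, Finset.mem_erase] at *
        tauto
    · set B := Real.exp (-(t - s0)) * Real.exp (2 * p * m) with hB
      set x := Real.exp (-a) with hx
      have e1 : Real.exp (a * s) = Real.exp (a * (s + 1 : ℕ)) * x := by
        rw [hx, ← Real.exp_add]; congr 1; push_cast; ring
      have e2 : Real.exp (x * p * A.card) = Real.exp (x * p * (A.erase v).card) * Real.exp (x * p) := by
        rw [← Real.exp_add, hA]; congr 1; ring
      have e3 : 1 + x * p ≤ Real.exp (x * p) := by linarith [Real.add_one_le_exp (x * p)]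
      have hBpos : 0 ≤ B := by positivity
      rw [e1, e2]
      set Y := Real.exp (a * (s + 1 : ℕ)) with hY
      set Z := Real.exp (x * p * (A.erase v).card) with hZ
      calc p ^ F.card * (Y * Z) * B + p ^ (F.card + 1) * (Y * x * Z) * B
          = p ^ F.card * (Y * (Z * (1 + x * p))) * B := by ring
        _ ≤ _ := by gcongr

section phase

lemma aux_cover {α ι : Type} (w : α → ℝ) (hw : ∀ e, 0 ≤ w e) (E E1 : Finset α) (I : Finset ι)
    (P : ι → Finset α) (h : ∀ e ∈ E, e ∈ E1 ∨ ∃ i ∈ I, e ∈ P i) :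
    ∑ e ∈ E, w e ≤ ∑ e ∈ E1, w e + ∑ i ∈ I, ∑ e ∈ P i, w e := by
  induction I using Finset.induction_on generalizing E with
  | empty =>
    simp only [Finset.notMem_empty, false_and, exists_false, or_false, Finset.sum_empty,
      add_zero] at h ⊢
    exact Finset.sum_le_sum_of_subset_of_nonneg h fun e _ _ => hw e
  | insert i I hi ih =>
    rw [Finset.sum_insert hi]
    have h1 := ih (E \ P i) (by
      intro e he
      rw [Finset.mem_sdiff] at he
      rcases h e he.1 with h | ⟨j, hj, hje⟩
      · exact Or.inl h
      · rcases Finset.mem_insert.1 hj with rfl | hj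
        · exact absurd hje he.2
        · exact Or.inr ⟨j, hj, hje⟩)
    have h2 : ∑ e ∈ E, w e ≤ ∑ e ∈ E \ P i, w e + ∑ e ∈ P i, w e := by
      have h3 : E ⊆ (E \ P i) ∪ P i := by
        intro e he
        simp only [Finset.mem_union, Finset.mem_sdiff]; tauto
      refine (Finset.sum_le_sum_of_subset_of_nonneg h3 fun e _ _ => hw e).trans ?_
      rw [Finset.sum_union Finset.sdiff_disjoint]
    linarith

lemma aux_double {V : Type} [Fintype V] (w : Finset V → ℝ) (r : ℕ)
    (hr : ∀ e, w e ≠ 0 → e.card = r) (A : Finset V) (E : Finset (Finset V))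
    (hE : ∀ e ∈ E, e ⊆ A) :
    ∑ v ∈ A, ∑ e ∈ E.filter (fun e => v ∈ e), w e = r * ∑ e ∈ E, w e := by
  simp_rw [Finset.sum_filter]
  rw [Finset.sum_comm, Finset.mul_sum]
  refine Finset.sum_congr rfl fun e he => ?_
  rw [← Finset.sum_filter, Finset.sum_const, nsmul_eq_mul]
  by_cases h : w e = 0
  · simp [h]
  · have : A.filter (fun v => v ∈ e) = e := by
      ext x; simp only [Finset.mem_filter]
      exact ⟨fun h => h.2, fun h => ⟨hE e he h, h⟩⟩
    rw [this, hr e h]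

lemma aux_restrict {V : Type} [Fintype V] (w : Finset V → ℝ) (hw : ∀ e, 0 ≤ w e) (K : ℝ)
    (hK : ∀ v : V, ∑ e with {v} ⊆ e, w e ≤ K) (A A₀ : Finset V) :
    ∑ e with e ⊆ A₀, w e ≤ ∑ e with e ⊆ A, w e + ((A₀ \ A).card : ℝ) * K := by
  have h := aux_cover w hw (Finset.univ.filter fun e => e ⊆ A₀)
    (Finset.univ.filter fun e => e ⊆ A) (A₀ \ A) (fun v => Finset.univ.filter fun e => {v} ⊆ e) (by
      intro e he
      simp only [Finset.mem_filter, Finset.mem_univ, true_and] at he ⊢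
      by_cases hA : e ⊆ A
      · exact Or.inl hA
      · obtain ⟨v, hv, hvA⟩ := Finset.not_subset.1 hA
        exact Or.inr ⟨v, Finset.mem_sdiff.2 ⟨he hv, hvA⟩, by simpa using hv⟩)
  have h2 : ∑ v ∈ A₀ \ A, ∑ e with {v} ⊆ e, w e ≤ ∑ v ∈ A₀ \ A, K :=
    Finset.sum_le_sum fun v _ => hK v
  rw [Finset.sum_const, nsmul_eq_mul] at h2
  linarith

/-- number of subsets double counting -/
lemma aux_sub {V : Type} [Fintype V] (w : Finset V → ℝ) (hw : ∀ e, 0 ≤ w e) (r : ℕ)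
    (hr : ∀ e, w e ≠ 0 → e.card = r) (I : Finset (Finset V)) :
    ∑ L ∈ I, ∑ e with L ⊆ e, w e ≤ 2 ^ r * ∑ e, w e := by
  simp_rw [Finset.sum_filter]
  rw [Finset.sum_comm, Finset.mul_sum]
  refine Finset.sum_le_sum fun e _ => ?_
  rw [← Finset.sum_filter, Finset.sum_const, nsmul_eq_mul]
  by_cases h : w e = 0
  · simp [h]
  · refine mul_le_mul_of_nonneg_right ?_ (hw e)
    have h1 : I.filter (fun L => L ⊆ e) ⊆ e.powerset := by
      intro L hL
      exact Finset.mem_powerset.2 (Finset.mem_filter.1 hL).2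
    have h2 := Finset.card_le_card h1
    rw [Finset.card_powerset, hr e h] at h2
    exact_mod_cast h2

def AuxPhase (r : ℕ) (β c C : ℝ) : Prop :=
  ∀ (V : Type) [Fintype V] (bad : Finset V → Prop), (∀ A B : Finset V, A ⊆ B → bad A → bad B) →
    ∀ q M N : ℝ, 0 < q → 0 < M → 0 < N → ∀ w : Finset V → ℝ, (∀ e, 0 ≤ w e) →
    (∀ e, w e ≠ 0 → e.card = r) →
    (∀ L : Finset V, L.Nonempty → ∑ e with L ⊆ e, w e ≤ M * q ^ (L.card - 1)) →
    ∀ F A : Finset V, (A.card : ℝ) ≤ N → (∀ e, w e ≠ 0 → e ⊆ A → bad (F ∪ e)) →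
    β * M * N ≤ ∑ e with e ⊆ A, w e → ∀ s : ℕ, C * (q * N + 1) ≤ s →
    AuxWin bad (fun A' => (A'.card : ℝ) ≤ A.card - c * N) s F A

lemma aux_phase_one (β : ℝ) : AuxPhase 1 β β 1 := by
  intro V _ bad hbad q M N hq hM hN w hw hr hcap F A hAN hval htot s hs
  have hs1 : (1:ℝ) ≤ s := by nlinarith [mul_pos hq hN]
  have hs2 : 1 ≤ s := by exact_mod_cast hs1
  obtain ⟨t, rfl⟩ : ∃ t, s = t + 1 := ⟨s - 1, by omega⟩
  have hd := aux_double w 1 hr A (Finset.univ.filter fun e => e ⊆ A) (by simp)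
  set d : V → ℝ := fun v => ∑ e ∈ (Finset.univ.filter fun e => e ⊆ A).filter (fun e => v ∈ e), w e
    with hdd
  refine AuxWin.forbid t F (A.filter fun v => d v ≠ 0) A (Finset.filter_subset _ _) ?_ ?_
  · intro v hv
    obtain ⟨e, he, hne⟩ := Finset.exists_ne_zero_of_sum_ne_zero (Finset.mem_filter.1 hv).2
    simp only [Finset.mem_filter, Finset.mem_univ, true_and] at he
    have h1 := hval e hne he.1
    have h2 : e = {v} := by
      obtain ⟨u, hu⟩ := Finset.card_eq_one.1 (hr e hne)
      rw [hu] at he ⊢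
      simp only [Finset.mem_singleton] at he
      rw [he.2]
    refine hbad _ _ ?_ h1
    rw [h2, Finset.union_comm]; rfl
  · have h1 : ∑ v ∈ A, d v ≤ ((A.filter fun v => d v ≠ 0).card : ℝ) * M := by
      rw [← Finset.sum_filter_ne_zero, ← nsmul_eq_mul, ← Finset.sum_const]
      refine Finset.sum_le_sum fun v _ => ?_
      have h2 := hcap {v} (Finset.singleton_nonempty v)
      simp only [Finset.card_singleton, Nat.sub_self, pow_zero, mul_one] at h2
      refine le_trans (Finset.sum_le_sum_of_subset_of_nonneg ?_ fun e _ _ => hw e) h2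
      intro e he
      simp only [Finset.mem_filter, Finset.mem_univ, true_and] at he
      simpa using he.2
    have h3 : β * M * N ≤ ((A.filter fun v => d v ≠ 0).card : ℝ) * M := by
      refine (htot.trans ?_).trans h1
      rw [hd]; simp
    have h4 : β * N ≤ ((A.filter fun v => d v ≠ 0).card : ℝ) := by
      by_contra hcon
      push Not at hcon
      nlinarith
    have h5 := Finset.card_sdiff_add_card_eq_card (Finset.filter_subset (fun v => d v ≠ 0) A)
    have h6 : ((A \ A.filter fun v => d v ≠ 0).card : ℝ) + ((A.filter fun v => d v ≠ 0).card : ℝ)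
      = A.card := by exact_mod_cast h5
    linarith


lemma aux_upd {V : Type} [Fintype V] (w u : Finset V → ℝ) (v : V) (Ev : Finset (Finset V))
    (P : Finset V → Prop) [DecidablePred P] :
    ∑ L with P L, (u L + ∑ e ∈ Ev with e.erase v = L, w e) =
      ∑ L with P L, u L + ∑ e ∈ Ev with P (e.erase v), w e := by
  rw [Finset.sum_add_distrib]
  congr 1
  rw [← Finset.sum_fiberwise_of_maps_to (s := Ev.filter fun e => P (e.erase v))
    (t := Finset.univ.filter P) (g := fun e => e.erase v)]
  · refine Finset.sum_congr rfl fun L hL => ?_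
    have hP := (Finset.mem_filter.1 hL).2
    refine Finset.sum_congr ?_ fun _ _ => rfl
    ext e
    simp only [Finset.mem_filter]
    constructor
    · rintro ⟨h1, h2⟩; exact ⟨⟨h1, by rw [h2]; exact hP⟩, h2⟩
    · rintro ⟨⟨h1, _⟩, h2⟩; exact ⟨h1, h2⟩
  · intro e he
    simp only [Finset.mem_filter, Finset.mem_univ, true_and] at he ⊢
    exact he.2

lemma aux_upd_univ {V : Type} [Fintype V] (w u : Finset V → ℝ) (v : V) (Ev : Finset (Finset V)) :
    ∑ L, (u L + ∑ e ∈ Ev with e.erase v = L, w e) = ∑ L, u L + ∑ e ∈ Ev, w e := by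
  have := aux_upd w u v Ev (fun _ => True)
  simpa using this

/-- existence of a good vertex -/
lemma aux_vertex {V : Type} [Fintype V] (r : ℕ) (β q M N : ℝ) (hβ : 0 < β) (hq : 0 < q)
    (hM : 0 < M) (hN : 0 < N) (w u : Finset V → ℝ) (hw : ∀ e, 0 ≤ w e) (hu : ∀ e, 0 ≤ u e)
    (hwr : ∀ e, w e ≠ 0 → e.card = r + 1) (hur : ∀ e, u e ≠ 0 → e.card = r)
    (hcap : ∀ L : Finset V, L.Nonempty → ∑ e with L ⊆ e, w e ≤ M * q ^ (L.card - 1))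
    (A A₀ : Finset V) (hAN : (A.card : ℝ) ≤ N) (htot : β * M * N ≤ ∑ e with e ⊆ A₀, w e)
    (hloss : ((A₀ \ A).card : ℝ) ≤ β / 4 * N)
    (hsmall : ∑ e, u e ≤ β * q * M * N / 2 ^ (r + 2)) (hr : 1 ≤ r) :
    ∃ v ∈ A, β * M / 2 ≤ ∑ e ∈ (Finset.univ.filter fun e : Finset V => e ⊆ A ∧ ∀ L ⊆ e, L.Nonempty →
      ∑ e' with L ⊆ e', u e' < M * q ^ L.card).filter (fun e => v ∈ e), w e := by
  set E := Finset.univ.filter fun e : Finset V => e ⊆ A ∧ ∀ L ⊆ e, L.Nonempty →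
      ∑ e' with L ⊆ e', u e' < M * q ^ L.card with hE
  set Sat := Finset.univ.filter fun L : Finset V => L.Nonempty ∧
    M * q ^ L.card ≤ ∑ e' with L ⊆ e', u e' with hSat
  have h1 := aux_restrict w hw M (fun v => by
    have := hcap {v} (Finset.singleton_nonempty v)
    simpa using this) A A₀
  have h2 := aux_cover w hw (Finset.univ.filter fun e => e ⊆ A) E Sat
    (fun L => Finset.univ.filter fun e => L ⊆ e) (by
      intro e he
      simp only [Finset.mem_filter, Finset.mem_univ, true_and, hE, hSat] at he ⊢
      by_contra hcon
      push Not at hcon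
      obtain ⟨L, hL, hLn, hLs⟩ := hcon.1 he
      exact hcon.2 L ⟨hLn, hLs⟩ hL)
  have h3 : ∑ L ∈ Sat, ∑ e with L ⊆ e, w e ≤ ∑ L ∈ Sat, q⁻¹ * ∑ e with L ⊆ e, u e := by
    refine Finset.sum_le_sum fun L hL => ?_
    simp only [Finset.mem_filter, Finset.mem_univ, true_and, hSat] at hL
    refine (hcap L hL.1).trans ?_
    have h4 : M * q ^ (L.card - 1) = q⁻¹ * (M * q ^ L.card) := by
      have h5 : L.card = (L.card - 1) + 1 := by have := hL.1.card_pos; omega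
      conv_rhs => rw [h5, pow_succ]
      field_simp
    rw [h4]
    exact mul_le_mul_of_nonneg_left hL.2 (by positivity)
  rw [← Finset.mul_sum] at h3
  have h6 := aux_sub u hu r hur Sat
  have h7 : ∑ L ∈ Sat, ∑ e with L ⊆ e, w e ≤ β * M * N / 4 := by
    refine h3.trans ?_
    rw [inv_mul_le_iff₀ hq]
    refine h6.trans ((mul_le_mul_of_nonneg_left hsmall (by positivity)).trans (le_of_eq ?_))
    rw [pow_add]; field_simp; norm_num
  have h8 : ((A₀ \ A).card : ℝ) * M ≤ β / 4 * N * M := mul_le_mul_of_nonneg_right hloss hM.le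
  have h9 : β * M * N / 2 ≤ ∑ e ∈ E, w e := by linarith
  by_contra hcon
  push Not at hcon
  have h10 := aux_double w (r + 1) hwr A E (by
    intro e he
    exact (Finset.mem_filter.1 he).2.1)
  have h11 : ∑ v ∈ A, ∑ e ∈ E.filter (fun e => v ∈ e), w e ≤ ∑ v ∈ A, β * M / 2 :=
    Finset.sum_le_sum fun v hv => (hcon v hv).le
  rw [h10, Finset.sum_const, nsmul_eq_mul] at h11
  have h12 : (A.card : ℝ) * (β * M / 2) ≤ N * (β * M / 2) :=
    mul_le_mul_of_nonneg_right hAN (by positivity)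
  have h13 : (0:ℝ) < β * M * N / 2 := by positivity
  have h14 : (1:ℝ) ≤ r := by exact_mod_cast hr
  push_cast at h11
  nlinarith

lemma aux_phase_step (r : ℕ) (hr : 1 ≤ r) (β c C : ℝ) (hβ : 0 < β) (hC : 0 ≤ C)
    (ih : AuxPhase r (β / 2 ^ (r + 4)) c C) :
    AuxPhase (r + 1) β (min c (β / 2 ^ (r + 4))) (C + 1) := by
  intro V _ bad hbad q M N hq hM hN w hw hwr hcap F₀ A₀ hAN hval₀ htot s hs
  set c' := min c (β / 2 ^ (r + 4)) with hc'
  set T := β * q * M * N / 2 ^ (r + 2) with hT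
  have key : ∀ A : Finset V, ∀ F : Finset V, ∀ u : Finset V → ℝ, A ⊆ A₀ →
      (∀ e, w e ≠ 0 → e ⊆ A₀ → bad (F ∪ e)) →
      (∀ e, 0 ≤ u e) → (∀ e, u e ≠ 0 → e.card = r) → (∀ e, u e ≠ 0 → e ⊆ A₀) →
      (∀ e, u e ≠ 0 → bad (F ∪ e)) →
      (∀ L : Finset V, L.Nonempty → ∑ e with L ⊆ e, u e ≤ 2 * (M * q ^ L.card)) →
      ∀ s₁ : ℕ, T ≤ ∑ e, u e + s₁ * (β * M / 2) → ∀ s₂ : ℕ, C * (q * N + 1) ≤ s₂ →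
      AuxWin bad (fun A' => (A'.card : ℝ) ≤ A₀.card - c' * N) (s₁ + s₂) F A := by
    intro A
    induction A using Finset.strongInduction with
    | H A IH =>
    intro F u hA hval hu hur huA huval hucap s₁ hs₁ s₂ hs₂
    by_cases hgoal : (A.card : ℝ) ≤ A₀.card - c' * N
    · exact .done _ _ _ hgoal
    push Not at hgoal
    have hsd : ((A₀ \ A).card : ℝ) + A.card = A₀.card := by
      exact_mod_cast Finset.card_sdiff_add_card_eq_card hA
    have hloss : ((A₀ \ A).card : ℝ) ≤ β / 2 ^ (r + 4) * N := by
      have : c' * N ≤ β / 2 ^ (r + 4) * N := mul_le_mul_of_nonneg_right (min_le_right _ _) hN.le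
      linarith
    have hAN' : (A.card : ℝ) ≤ N := by
      have : (A.card : ℝ) ≤ A₀.card := by exact_mod_cast Finset.card_le_card hA
      linarith
    by_cases hbig : T ≤ ∑ e, u e
    · -- apply induction hypothesis
      have h1 := aux_restrict u hu (2 * (M * q)) (fun v => by
        have := hucap {v} (Finset.singleton_nonempty v)
        simpa using this) A A₀
      have h2 : ∑ e with e ⊆ A₀, u e = ∑ e, u e := by
        rw [Finset.sum_filter]
        refine Finset.sum_congr rfl fun e _ => ?_
        by_cases he : u e = 0
        · simp [he]
        · simp [huA e he]
      have h3 : ((A₀ \ A).card : ℝ) * (2 * (M * q)) ≤ T / 2 := by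
        refine (mul_le_mul_of_nonneg_right hloss (by positivity)).trans (le_of_eq ?_)
        rw [hT, pow_add, pow_add]; field_simp
      have h4 := ih V bad hbad q (2 * (M * q)) N hq (by positivity) hN u hu hur (by
        intro L hL
        refine (hucap L hL).trans (le_of_eq ?_)
        have h5 : L.card = (L.card - 1) + 1 := by have := hL.card_pos; omega
        conv_lhs => rw [h5, pow_succ]
        ring) F A hAN' (fun e he _ => huval e he) (by
          have h5 : β / 2 ^ (r + 4) * (2 * (M * q)) * N = T / 2 := by
            rw [hT, pow_add, pow_add]; field_simp
          linarith) s₂ hs₂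
      refine h4.mono ?_ _ (by omega)
      intro A' hA'
      have : (A.card : ℝ) ≤ A₀.card := by exact_mod_cast Finset.card_le_card hA
      have : c' * N ≤ c * N := mul_le_mul_of_nonneg_right (min_le_left _ _) hN.le
      linarith
    push Not at hbig
    have hs1pos : s₁ ≠ 0 := by
      rintro rfl
      simp at hs₁
      linarith
    obtain ⟨t, rfl⟩ : ∃ t, s₁ = t + 1 := ⟨s₁ - 1, by omega⟩
    obtain ⟨v, hvA, hv⟩ := aux_vertex r β q M N hβ hq hM hN w u hw hu hwr hur hcap A A₀ hAN' htot
      (hloss.trans (by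
        apply mul_le_mul_of_nonneg_right _ hN.le
        apply div_le_div_of_nonneg_left hβ.le (by norm_num)
        rw [pow_add]
        have : (1:ℝ) ≤ 2 ^ r := one_le_pow₀ (by norm_num)
        linarith)) hbig.le hr
    set E := Finset.univ.filter fun e : Finset V => e ⊆ A ∧ ∀ L ⊆ e, L.Nonempty →
      ∑ e' with L ⊆ e', u e' < M * q ^ L.card with hE
    set Ev := E.filter (fun e => v ∈ e) with hEv
    have hssub := Finset.erase_ssubset hvA
    have hsub' : A.erase v ⊆ A₀ := hssub.subset.trans hA
    have e1 : t + 1 + s₂ = (t + s₂) + 1 := by omega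
    rw [e1]
    refine .query _ _ _ v hvA ?_ ?_
    · rw [← e1]
      exact IH _ hssub F u hsub' hval hu hur huA huval hucap _ hs₁ _ hs₂
    · have hmemEv : ∀ e ∈ Ev, e ⊆ A ∧ v ∈ e ∧ ∀ L ⊆ e, L.Nonempty →
          ∑ e' with L ⊆ e', u e' < M * q ^ L.card := by
        intro e he
        simp only [hEv, hE, Finset.mem_filter, Finset.mem_univ, true_and] at he
        exact ⟨he.1.1, he.2, he.1.2⟩
      have hne : ∀ L, u L + ∑ e ∈ Ev with e.erase v = L, w e ≠ 0 →
          u L ≠ 0 ∨ ∃ e ∈ Ev, e.erase v = L ∧ w e ≠ 0 := by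
        intro L hL
        by_cases h : u L = 0
        · right
          rw [h, zero_add] at hL
          obtain ⟨e, he, hne⟩ := Finset.exists_ne_zero_of_sum_ne_zero hL
          exact ⟨e, (Finset.mem_filter.1 he).1, (Finset.mem_filter.1 he).2, hne⟩
        · exact Or.inl h
      have hins : ∀ e, bad (F ∪ e) → bad (insert v F ∪ e) := by
        intro e
        apply hbad
        exact Finset.union_subset_union_left (Finset.subset_insert _ _)
      refine IH _ hssub (insert v F) (fun L => u L + ∑ e ∈ Ev with e.erase v = L, w e) hsub'
        ?_ ?_ ?_ ?_ ?_ ?_ _ ?_ _ hs₂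
      · exact fun e h1 h2 => hins e (hval e h1 h2)
      · intro L
        have := Finset.sum_nonneg (s := Ev.filter fun e => e.erase v = L) (f := w) fun e _ => hw e
        have := hu L
        positivity
      · intro L hL
        rcases hne L hL with h | ⟨e, he, rfl, hwe⟩
        · exact hur L h
        · rw [Finset.card_erase_of_mem (hmemEv e he).2.1, hwr e hwe]; rfl
      · intro L hL
        rcases hne L hL with h | ⟨e, he, rfl, hwe⟩
        · exact huA L h
        · exact (Finset.erase_subset _ _).trans ((hmemEv e he).1.trans hA)
      · intro L hL
        rcases hne L hL with h | ⟨e, he, rfl, hwe⟩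
        · exact hins L (huval L h)
        · refine hbad _ _ ?_ (hval e hwe ((hmemEv e he).1.trans hA))
          intro x hx
          simp only [Finset.mem_union, Finset.mem_insert, Finset.mem_erase] at hx ⊢
          tauto
      · intro L hL
        rw [aux_upd w u v Ev (fun e => L ⊆ e)]
        by_cases hex : ∃ e ∈ Ev, L ⊆ e.erase v
        · obtain ⟨e, he, hLe⟩ := hex
          have h1 := (hmemEv e he).2.2 L (hLe.trans (Finset.erase_subset _ _)) hL
          have hvL : v ∉ L := fun h => Finset.notMem_erase v e (hLe h)
          have h2 := hcap (insert v L) (Finset.insert_nonempty _ _)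
          rw [Finset.card_insert_of_notMem hvL, Nat.add_sub_cancel] at h2
          have h3 : ∑ e ∈ Ev with L ⊆ e.erase v, w e ≤ ∑ e with insert v L ⊆ e, w e := by
            refine Finset.sum_le_sum_of_subset_of_nonneg ?_ fun e _ _ => hw e
            intro e' he'
            rw [Finset.mem_filter] at he' ⊢
            refine ⟨Finset.mem_univ _, Finset.insert_subset (hmemEv e' he'.1).2.1
              (he'.2.trans (Finset.erase_subset _ _))⟩
          linarith
        · rw [Finset.filter_false_of_mem (s := Ev), Finset.sum_empty, add_zero]
          · exact hucap L hL
          · intro e he h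
            exact hex ⟨e, he, h⟩
      · rw [aux_upd_univ]
        push_cast at hs₁
        linarith
  have hqN : 0 < q * N := mul_pos hq hN
  have hceil : (⌈q * N⌉₊ : ℝ) < q * N + 1 := Nat.ceil_lt_add_one hqN.le
  have hceil' : q * N ≤ (⌈q * N⌉₊ : ℝ) := Nat.le_ceil _
  have hle : ⌈q * N⌉₊ ≤ s := by
    have : (⌈q * N⌉₊ : ℝ) ≤ s := by nlinarith
    exact_mod_cast this
  have := key A₀ F₀ (fun _ => 0) (Finset.Subset.refl _) hval₀ (by simp) (by simp) (by simp)
    (by simp) (by intro L _; simp; positivity) ⌈q * N⌉₊ (by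
      rw [hT]
      simp only [Finset.sum_const_zero, zero_add]
      have h1 : β * q * M * N / 2 ^ (r + 2) ≤ β * q * M * N / 2 := by
        apply div_le_div_of_nonneg_left (by positivity) (by norm_num)
        rw [pow_add]
        have : (1:ℝ) ≤ 2 ^ r := one_le_pow₀ (by norm_num)
        linarith
      have h2 : q * N * (β * M / 2) ≤ ⌈q * N⌉₊ * (β * M / 2) :=
        mul_le_mul_of_nonneg_right hceil' (by positivity)
      linarith) (s - ⌈q * N⌉₊) (by
      rw [Nat.cast_sub hle]
      nlinarith)
  rwa [Nat.add_sub_cancel' hle] at this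

lemma aux_phase (r : ℕ) (hr : 1 ≤ r) : ∀ β : ℝ, 0 < β → ∃ c C : ℝ, 0 < c ∧ 0 < C ∧
    AuxPhase r β c C := by
  induction r, hr using Nat.le_induction with
  | base => exact fun β hβ => ⟨β, 1, hβ, one_pos, aux_phase_one β⟩
  | succ r hr ih =>
    intro β hβ
    obtain ⟨c, C, hc, hC, h⟩ := ih (β / 2 ^ (r + 4)) (by positivity)
    exact ⟨_, _, lt_min hc (by positivity), by linarith, aux_phase_step r hr β c C hβ hC.le h⟩

/-- Iterated version. -/
lemma aux_iterate {V : Type} {bad : Finset V → Prop} (d m : ℝ) (s : ℕ)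
    (h : ∀ F A : Finset V, m < A.card → AuxWin bad (fun A' => (A'.card : ℝ) ≤ A.card - d) s F A) :
    ∀ (n : ℕ) (F A : Finset V), (A.card : ℝ) ≤ m + n * d →
      AuxWin bad (fun A' => (A'.card : ℝ) ≤ m) (n * s) F A := by
  intro n
  induction n with
  | zero => intro F A hA; exact .done _ _ _ (by simpa using hA)
  | succ n ih =>
    intro F A hA
    by_cases hm : (A.card : ℝ) ≤ m
    · exact .done _ _ _ hm
    · push Not at hm
      have := (h F A hm).chain (g' := fun A' => (A'.card : ℝ) ≤ m) (s2 := n * s) (by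
        intro F' A' hA'
        apply ih
        push_cast at hA
        linarith)
      refine this.mono (fun _ h => h) _ (le_of_eq (by ring))

end phase

section alpha
variable {k : ℕ} {G : Type} [Fintype G]

lemma aux_le_alpha (S : Finset (Fin k → G)) (U : Finset (Fin k)) (g : Fin k → G) :
    ((distinctPart S).filter fun x : Fin k → G => ∀ j ∈ U, x j = g j).card ≤ alphaR S U.card := by
  unfold alphaR
  have hU : U ∈ (Finset.univ.filter fun U' : Finset (Fin k) => U'.card = U.card) :=
    Finset.mem_filter.2 ⟨Finset.mem_univ _, rfl⟩
  refine le_trans ?_ (Finset.le_sup (f := fun U : Finset (Fin k) =>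
    Finset.univ.sup fun g : Fin k → G =>
      ((distinctPart S).filter fun x : Fin k → G => ∀ j ∈ U, x j = g j).card) hU)
  exact Finset.le_sup (f := fun g : Fin k → G =>
      ((distinctPart S).filter fun x : Fin k → G => ∀ j ∈ U, x j = g j).card) (Finset.mem_univ g)

lemma aux_alpha_attained [Nonempty G] (S : Finset (Fin k → G)) (ℓ : ℕ) (hℓ : ℓ ≤ k) :
    ∃ (U : Finset (Fin k)) (g : Fin k → G), U.card = ℓ ∧
      alphaR S ℓ = ((distinctPart S).filter fun x : Fin k → G => ∀ j ∈ U, x j = g j).card := by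
  have h1 : (Finset.univ.filter fun U : Finset (Fin k) => U.card = ℓ).Nonempty := by
    obtain ⟨U, hU, hc⟩ := Finset.exists_subset_card_eq (s := (Finset.univ : Finset (Fin k)))
      (n := ℓ) (by simpa using hℓ)
    exact ⟨U, Finset.mem_filter.2 ⟨Finset.mem_univ _, hc⟩⟩
  obtain ⟨U, hU, hUe⟩ := Finset.exists_mem_eq_sup _ h1 (fun U : Finset (Fin k) =>
    Finset.univ.sup fun g : Fin k → G =>
      ((distinctPart S).filter fun x : Fin k → G => ∀ j ∈ U, x j = g j).card)
  obtain ⟨g, _, hg⟩ := Finset.exists_mem_eq_sup (Finset.univ : Finset (Fin k → G))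
    Finset.univ_nonempty (fun g : Fin k → G =>
      ((distinctPart S).filter fun x : Fin k → G => ∀ j ∈ U, x j = g j).card)
  refine ⟨U, g, (Finset.mem_filter.1 hU).2, ?_⟩
  unfold alphaR
  rw [hUe, hg]

lemma aux_card_le_alpha_one (hk : 2 ≤ k) (S : Finset (Fin k → G)) :
    (distinctPart S).card ≤ alphaR S 1 * Fintype.card G := by
  have h := Finset.card_le_mul_card_image_of_maps_to (s := distinctPart S)
    (t := (Finset.univ : Finset G)) (f := fun x : Fin k → G => x ⟨0, by omega⟩) (by simp) (alphaR S 1) (by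
      intro a _
      have := aux_le_alpha S {⟨0, by omega⟩} (fun _ => a)
      simpa using this)
  simpa using h

lemma aux_alpha_k_pos (S : Finset (Fin k → G)) (h : (distinctPart S).Nonempty) :
    1 ≤ alphaR S k := by
  obtain ⟨x, hx⟩ := h
  have := aux_le_alpha S Finset.univ x
  rw [Finset.card_univ, Fintype.card_fin] at this
  refine le_trans ?_ this
  rw [Nat.succ_le_iff, Finset.card_pos]
  exact ⟨x, by simp [hx]⟩

lemma aux_alpha_le (S : Finset (Fin k → G)) (h1 : 0 < alphaR S 1) (ℓ : ℕ) (hℓ1 : 1 ≤ ℓ)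
    (hℓ : ℓ ≤ k) : (alphaR S ℓ : ℝ) ≤ alphaR S 1 * pMax S ^ (ℓ - 1) := by
  rcases Nat.eq_or_lt_of_le hℓ1 with rfl | h2
  · simp
  have hfin : {x : ℝ | ∃ ℓ : ℕ, 2 ≤ ℓ ∧ ℓ ≤ k ∧
    x = ((alphaR S ℓ : ℝ) / (alphaR S 1 : ℝ)) ^ (1 / ((ℓ:ℝ) - 1))}.Finite := by
    refine ((Finset.Icc 2 k).image fun ℓ : ℕ =>
      ((alphaR S ℓ : ℝ) / (alphaR S 1 : ℝ)) ^ (1 / ((ℓ:ℝ) - 1))).finite_toSet.subset ?_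
    rintro x ⟨ℓ, h1, h2, rfl⟩
    simp only [Finset.coe_image, Set.mem_image, Finset.mem_coe, Finset.mem_Icc]
    exact ⟨ℓ, ⟨h1, h2⟩, rfl⟩
  have hle : ((alphaR S ℓ : ℝ) / (alphaR S 1 : ℝ)) ^ (1 / ((ℓ:ℝ) - 1)) ≤ pMax S :=
    le_csSup hfin.bddAbove ⟨ℓ, h2, hℓ, rfl⟩
  have hc : (1 / ((ℓ:ℝ) - 1)) = ((ℓ - 1 : ℕ) : ℝ)⁻¹ := by
    rw [Nat.cast_sub hℓ1]; simp
  rw [hc] at hle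
  have hpos : (0:ℝ) < alphaR S 1 := by exact_mod_cast h1
  have h3 := pow_le_pow_left₀ (by positivity) hle (ℓ - 1)
  rw [Real.rpow_inv_natCast_pow (by positivity) (by omega), div_le_iff₀ hpos] at h3
  linarith

lemma aux_pMax_attained (hk : 2 ≤ k) (S : Finset (Fin k → G)) : ∃ ℓ : ℕ, 2 ≤ ℓ ∧ ℓ ≤ k ∧
    0 ≤ pMax S ∧ pMax S ^ (ℓ - 1) = (alphaR S ℓ : ℝ) / alphaR S 1 := by
  have hfin : {x : ℝ | ∃ ℓ : ℕ, 2 ≤ ℓ ∧ ℓ ≤ k ∧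
    x = ((alphaR S ℓ : ℝ) / (alphaR S 1 : ℝ)) ^ (1 / ((ℓ:ℝ) - 1))}.Finite := by
    refine ((Finset.Icc 2 k).image fun ℓ : ℕ =>
      ((alphaR S ℓ : ℝ) / (alphaR S 1 : ℝ)) ^ (1 / ((ℓ:ℝ) - 1))).finite_toSet.subset ?_
    rintro x ⟨ℓ, h1, h2, rfl⟩
    simp only [Finset.coe_image, Set.mem_image, Finset.mem_coe, Finset.mem_Icc]
    exact ⟨ℓ, ⟨h1, h2⟩, rfl⟩
  have hnon : {x : ℝ | ∃ ℓ : ℕ, 2 ≤ ℓ ∧ ℓ ≤ k ∧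
    x = ((alphaR S ℓ : ℝ) / (alphaR S 1 : ℝ)) ^ (1 / ((ℓ:ℝ) - 1))}.Nonempty :=
    ⟨_, k, hk, le_rfl, rfl⟩
  obtain ⟨ℓ, h1, h2, h3⟩ := hnon.csSup_mem hfin
  have h3' : pMax S = _ := h3
  have hc : (1 / ((ℓ:ℝ) - 1)) = ((ℓ - 1 : ℕ) : ℝ)⁻¹ := by
    rw [Nat.cast_sub (by omega)]; simp
  rw [hc] at h3'
  refine ⟨ℓ, h1, h2, ?_, ?_⟩
  · rw [h3']; positivity
  · rw [h3', Real.rpow_inv_natCast_pow (by positivity) (by omega)]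

variable [AddCommGroup G]

lemma aux_alpha_one_le (hk : 2 ≤ k) (S : Finset (Fin k → G))
    (M : (Fin k → G) →+ (Fin k → G)) (hinv : ∀ x : G, M (fun _ => x) = 0)
    (hker : ∀ x, x ∈ S ↔ M x = 0) :
    alphaR S 1 * Fintype.card G ≤ (distinctPart S).card := by
  obtain ⟨U, g, hU, hα⟩ := aux_alpha_attained S 1 (by omega)
  obtain ⟨j, rfl⟩ := Finset.card_eq_one.1 hU
  rw [hα, ← Finset.card_univ, ← Finset.card_product]
  refine Finset.card_le_card_of_injOn (fun xa => xa.1 + fun _ => xa.2) ?_ ?_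
  · rintro ⟨x, a⟩ hx
    simp only [Finset.coe_product, Set.mem_prod, Finset.mem_coe, Finset.mem_filter, distinctPart,
      hker] at hx ⊢
    refine ⟨by rw [map_add, hx.1.1.1, hinv, add_zero], ?_⟩
    intro i i' h
    exact hx.1.1.2 (by simpa using h)
  · rintro ⟨x, a⟩ hx ⟨y, b⟩ hy h
    simp only [Finset.coe_product, Set.mem_prod, Finset.mem_coe, Finset.mem_filter,
      Finset.mem_singleton, forall_eq] at hx hy h
    have h1 := congrFun h j
    simp only [Pi.add_apply, hx.1.2, hy.1.2, add_right_inj] at h1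
    subst h1
    simp only [add_left_inj] at h
    rw [h]

lemma aux_family (S : Finset (Fin k → G))
    (M : (Fin k → G) →+ (Fin k → G)) 
    (hker : ∀ x, x ∈ S ↔ M x = 0) (ℓ : ℕ) (hℓ : ℓ ≤ k) :
    ∃ U : Finset (Fin k), U.card = ℓ ∧
      ((distinctPart S).image fun x => U.image x).card * alphaR S ℓ ≤ S.card := by
  obtain ⟨U, g, hU, hα⟩ := aux_alpha_attained S ℓ hℓ
  refine ⟨U, hU, ?_⟩
  rcases Nat.eq_zero_or_pos (alphaR S ℓ) with h0 | hpos
  · rw [h0]; simp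
  have hne := hpos
  rw [hα, gt_iff_lt, Finset.card_pos] at hne
  obtain ⟨x0, hx0⟩ := hne
  rw [Finset.card_eq_sum_card_fiberwise (s := S) (f := fun x => U.image x)
    (t := S.image fun x => U.image x) (by intro x hx; exact Finset.mem_image_of_mem _ hx)]
  have hsub : ((distinctPart S).image fun x => U.image x) ⊆ S.image fun x => U.image x :=
    Finset.image_subset_image (Finset.filter_subset _ _)
  refine le_trans ?_ (Finset.sum_le_sum_of_subset hsub)
  rw [← smul_eq_mul]
  refine Finset.card_nsmul_le_sum _ _ _ ?_
  intro B hB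
  obtain ⟨x, hx, rfl⟩ := Finset.mem_image.1 hB
  rw [hα]
  simp only [distinctPart, Finset.mem_filter, hker] at hx hx0
  refine Finset.card_le_card_of_injOn (fun z => x + z - x0) ?_ ?_
  · intro z hz
    simp only [distinctPart, Finset.mem_coe, Finset.mem_filter, hker] at hz ⊢
    refine ⟨by rw [map_sub, map_add, hx.1, hz.1.1, hx0.1.1]; simp, ?_⟩
    refine Finset.image_congr ?_
    intro j hj
    simp [hz.2 j hj, hx0.2 j hj]
  · intro z _ z' _ h
    simpa using h

end alpha

section weights
variable {k : ℕ} {G : Type} [Fintype G]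

noncomputable def auxW (D : Finset (Fin k → G)) (e : Finset G) : ℝ :=
  ((D.filter fun x => Finset.univ.image x = e).card : ℝ)

lemma auxW_sum (D : Finset (Fin k → G)) (P : Finset G → Prop) [DecidablePred P] :
    ∑ e with P e, auxW D e = ((D.filter fun x => P (Finset.univ.image x)).card : ℝ) := by
  rw [Finset.card_eq_sum_card_fiberwise (s := D.filter fun x => P (Finset.univ.image x))
    (f := fun x => Finset.univ.image x) (t := Finset.univ.filter P) (by
      intro x hx
      simp only [Finset.mem_coe, Finset.mem_filter, Finset.mem_univ, true_and] at hx ⊢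
      exact hx.2)]
  push_cast
  refine Finset.sum_congr rfl fun e he => ?_
  unfold auxW
  congr 2
  ext x
  simp only [Finset.mem_filter, Finset.mem_univ, true_and] at he ⊢
  constructor
  · rintro ⟨h1, h2⟩; exact ⟨⟨h1, by rw [h2]; exact he⟩, h2⟩
  · rintro ⟨⟨h1, _⟩, h2⟩; exact ⟨h1, h2⟩

lemma aux_deg (S : Finset (Fin k → G)) (L : Finset G) :
    ((distinctPart S).filter fun x : Fin k → G => L ⊆ Finset.univ.image x).card ≤
      k ^ L.card * alphaR S L.card := by
  have hsub : ((distinctPart S).filter fun x : Fin k → G => L ⊆ Finset.univ.image x) ⊆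
      (Finset.univ : Finset (L → Fin k)).biUnion fun f =>
        (distinctPart S).filter fun x : Fin k → G => ∀ l : L, x (f l) = (l : G) := by
    intro x hx
    simp only [Finset.mem_filter, Finset.mem_biUnion, Finset.mem_univ, true_and] at hx ⊢
    have : ∀ l : L, ∃ j, x j = (l : G) := by
      intro l
      have := hx.2 l.2
      simpa using this
    choose f hf using this
    exact ⟨f, hx.1, hf⟩
  refine (Finset.card_le_card hsub).trans ((Finset.card_biUnion_le_card_mul _ _
    (alphaR S L.card) ?_).trans (le_of_eq ?_))
  · intro f _
    rcases Finset.eq_empty_or_nonempty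
      ((distinctPart S).filter fun x : Fin k → G => ∀ l : L, x (f l) = (l : G)) with h | ⟨x0, hx0⟩
    · rw [h]; simp
    · have hf : Function.Injective f := by
        intro a b hab
        have h1 := (Finset.mem_filter.1 hx0).2 a
        have h2 := (Finset.mem_filter.1 hx0).2 b
        rw [hab, h2] at h1
        exact Subtype.ext h1.symm
      have hU : (Finset.univ.image f).card = L.card := by
        rw [Finset.card_image_of_injective _ hf, Finset.card_univ, Fintype.card_coe]
      rw [← hU]
      refine le_trans (Finset.card_le_card ?_) (aux_le_alpha S (Finset.univ.image f) x0)
      intro x hx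
      simp only [Finset.mem_filter] at hx hx0 ⊢
      refine ⟨hx.1, ?_⟩
      intro j hj
      obtain ⟨l, _, rfl⟩ := Finset.mem_image.1 hj
      rw [hx.2, hx0.2]
  · rw [Finset.card_univ, Fintype.card_fun, Fintype.card_coe, Fintype.card_fin]

/-- Container game for the system. -/
lemma aux_system (hk : 2 ≤ k) (S : Finset (Fin k → G)) (γ ε c C : ℝ) 
    (hph : AuxPhase k (γ / (2 * k ^ k)) c C) (hγ : 0 < γ)
    (hα : 0 < alphaR S 1) (hα' : alphaR S 1 * Fintype.card G ≤ (distinctPart S).card)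
    (hN : 0 < Fintype.card G) (hq : 0 < pMax S)
    (hsup : ∀ X : Finset G, ε * (Fintype.card G : ℝ) ≤ (X.card : ℝ) →
      γ * (S.card : ℝ) ≤ ((S.filter (fun x => ∀ j, x j ∈ X)).card : ℝ))
    (hD : (1 - γ / 2) * S.card ≤ (distinctPart S).card)
    (s n : ℕ) (hs : C * (pMax S * Fintype.card G + 1) ≤ s) (hε : 0 ≤ ε) (hn : 1 ≤ n * c) :
    AuxWin (fun F => ∃ x ∈ distinctPart S, ∀ j, x j ∈ F)
      (fun A' => (A'.card : ℝ) ≤ ε * Fintype.card G) (n * s) ∅ Finset.univ := by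
  have hNr : (0:ℝ) < Fintype.card G := by exact_mod_cast hN
  have hαr : (0:ℝ) < alphaR S 1 := by exact_mod_cast hα
  have hkr : (1:ℝ) ≤ k := by exact_mod_cast (by omega : 1 ≤ k)
  have hmono : ∀ A B : Finset G, A ⊆ B → (∃ x ∈ distinctPart S, ∀ j, x j ∈ A) →
      (∃ x ∈ distinctPart S, ∀ j, x j ∈ B) := by
    rintro A B h ⟨x, hx, hxA⟩
    exact ⟨x, hx, fun j => h (hxA j)⟩
  refine aux_iterate (c * Fintype.card G) (ε * Fintype.card G) s ?_ n ∅ Finset.univ ?_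
  swap
  · rw [Finset.card_univ]
    have : 0 ≤ ε * Fintype.card G := by positivity
    nlinarith
  intro F A hA
  have hne : ∀ e, auxW (distinctPart S) e ≠ 0 →
      ∃ x ∈ distinctPart S, Finset.univ.image x = e := by
    intro e he
    unfold auxW at he
    have h1 : ((distinctPart S).filter fun x : Fin k → G => Finset.univ.image x = e).Nonempty := by
      rw [Finset.nonempty_iff_ne_empty]
      intro h
      rw [h] at he
      simp at he
    obtain ⟨x, hx⟩ := h1
    exact ⟨x, (Finset.mem_filter.1 hx).1, (Finset.mem_filter.1 hx).2⟩
  refine hph G _ hmono (pMax S) (k ^ k * alphaR S 1) (Fintype.card G) hq (by positivity) hNr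
    (auxW (distinctPart S)) (fun e => Nat.cast_nonneg _) ?_ ?_ F A ?_ ?_ ?_ s hs
  · intro e he
    obtain ⟨x, hx, rfl⟩ := hne e he
    have hx' : Function.Injective x := (Finset.mem_filter.1 hx).2
    rw [Finset.card_image_of_injective _ hx', Finset.card_univ, Fintype.card_fin]
  · intro L hL
    rw [auxW_sum]
    by_cases hLk : L.card ≤ k
    · have h1 := aux_deg S L
      have h2 := aux_alpha_le S hα L.card hL.card_pos hLk
      have h3 : (((distinctPart S).filter fun x : Fin k → G => L ⊆ Finset.univ.image x).card : ℝ) ≤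
        k ^ L.card * alphaR S L.card := by exact_mod_cast h1
      calc _ ≤ (k:ℝ) ^ L.card * alphaR S L.card := h3
        _ ≤ (k:ℝ) ^ k * (alphaR S 1 * pMax S ^ (L.card - 1)) := by
            gcongr
        _ = _ := by ring
    · rw [Finset.filter_false_of_mem]
      · simp only [Finset.card_empty, Nat.cast_zero]; positivity
      · intro x _ h
        have h1 := (Finset.card_le_card h).trans Finset.card_image_le
        rw [Finset.card_univ, Fintype.card_fin] at h1
        exact hLk h1
  · exact_mod_cast Finset.card_le_univ A
  · intro e he _
    obtain ⟨x, hx, rfl⟩ := hne e he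
    exact ⟨x, hx, fun j => Finset.mem_union_right _ (Finset.mem_image_of_mem _ (Finset.mem_univ _))⟩
  · rw [auxW_sum]
    have h1 := hsup A hA.le
    have h2 : (S.filter (fun x => ∀ j, x j ∈ A)) ⊆
        ((distinctPart S).filter fun x : Fin k → G => Finset.univ.image x ⊆ A) ∪ (S \ distinctPart S) := by
      intro x hx
      simp only [Finset.mem_union, Finset.mem_filter, Finset.mem_sdiff] at hx ⊢
      by_cases hxD : x ∈ distinctPart S
      · left
        refine ⟨hxD, ?_⟩
        intro y hy
        obtain ⟨j, _, rfl⟩ := Finset.mem_image.1 hy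
        exact hx.2 j
      · exact Or.inr ⟨hx.1, hxD⟩
    have h3 := (Finset.card_le_card h2).trans (Finset.card_union_le _ _)
    have h4 := Finset.card_sdiff_add_card_eq_card (show distinctPart S ⊆ S from
      Finset.filter_subset _ _)
    have h5 : ((S.filter (fun x => ∀ j, x j ∈ A)).card : ℝ) ≤
      ((distinctPart S).filter fun x : Fin k → G => Finset.univ.image x ⊆ A).card + (S \ distinctPart S).card := by
      exact_mod_cast h3
    have h6 : ((S \ distinctPart S).card : ℝ) + (distinctPart S).card = S.card := by
      exact_mod_cast h4
    have h7 : (alphaR S 1 : ℝ) * Fintype.card G ≤ (distinctPart S).card := by exact_mod_cast hα'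
    have h9 : γ / (2 * k ^ k) * (k ^ k * alphaR S 1) * Fintype.card G =
      γ / 2 * (alphaR S 1 * Fintype.card G) := by field_simp
    rw [h9]
    have h10 : γ / 2 * ((alphaR S 1 : ℝ) * Fintype.card G) ≤ γ / 2 * S.card := by
      apply mul_le_mul_of_nonneg_left _ (by positivity)
      have : (0:ℝ) ≤ (S \ distinctPart S).card := by positivity
      linarith
    linarith

end weights

section lower
variable {G : Type} [Fintype G]

lemma aux_disj {p : ℝ} (h0 : 0 ≤ p) (h1 : p ≤ 1) (T : Finset (Finset G)) (ℓ m : ℕ)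
    (hT : ∀ B ∈ T, B.card = ℓ) :
    binomProb p (Finset.univ.filter fun X : Finset G => ∃ D : Finset (Finset G), D ⊆ T ∧
      D.card = m ∧ (D : Set (Finset G)).PairwiseDisjoint id ∧ ∀ B ∈ D, B ⊆ X) ≤
      ((T.card : ℝ) * p ^ ℓ) ^ m / (m.factorial : ℝ) := by
  have hsub : (Finset.univ.filter fun X : Finset G => ∃ D : Finset (Finset G), D ⊆ T ∧
      D.card = m ∧ (D : Set (Finset G)).PairwiseDisjoint id ∧ ∀ B ∈ D, B ⊆ X) ⊆
      ((T.powersetCard m).filter fun D : Finset (Finset G) => (D : Set (Finset G)).PairwiseDisjoint id).biUnion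
        fun D : Finset (Finset G) => Finset.univ.filter fun X : Finset G => D.biUnion id ⊆ X := by
    intro X hX
    simp only [Finset.mem_filter, Finset.mem_univ, true_and, Finset.mem_biUnion,
      Finset.mem_powersetCard] at hX ⊢
    obtain ⟨D, hD, hc, hd, hB⟩ := hX
    exact ⟨D, ⟨⟨hD, hc⟩, hd⟩, Finset.biUnion_subset.2 hB⟩
  refine (aux_bp_mono h0 h1 hsub).trans ((aux_bp_biUnion h0 h1 _ _).trans ?_)
  have hterm : ∀ D ∈ ((T.powersetCard m).filter fun D : Finset (Finset G) =>
      (D : Set (Finset G)).PairwiseDisjoint id),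
      binomProb p (Finset.univ.filter fun X : Finset G => D.biUnion id ⊆ X) ≤ p ^ (m * ℓ) := by
    intro D hD
    rw [Finset.mem_filter, Finset.mem_powersetCard] at hD
    refine (aux_bp_sup h0 h1 _).trans (le_of_eq ?_)
    congr 1
    rw [Finset.card_biUnion (fun x hx y hy hxy => hD.2 hx hy hxy)]
    rw [show (∑ u ∈ D, (id u : Finset G).card) = ∑ u ∈ D, ℓ from
      Finset.sum_congr rfl (fun B hB => hT B (hD.1.1 hB)),
      Finset.sum_const, hD.1.2, smul_eq_mul]
  refine (Finset.sum_le_card_nsmul _ _ _ hterm).trans ?_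
  rw [nsmul_eq_mul]
  have hc : ((((T.powersetCard m).filter fun D : Finset (Finset G) =>
      (D : Set (Finset G)).PairwiseDisjoint id).card : ℕ) : ℝ) ≤ (T.card : ℝ) ^ m / m.factorial := by
    refine le_trans ?_ (Nat.choose_le_pow_div m T.card)
    rw [← Finset.card_powersetCard]
    exact_mod_cast Finset.card_filter_le _ _
  calc _ ≤ (T.card : ℝ) ^ m / m.factorial * p ^ (m * ℓ) := by gcongr
    _ = _ := by rw [mul_pow, ← pow_mul, mul_comm ℓ m]; ring

lemma aux_maxdisj (T : Finset (Finset G)) (ℓ m : ℕ) (hℓ : 1 ≤ ℓ)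
    (hT : ∀ B ∈ T, B.card = ℓ) (X : Finset G)
    (hX : ¬ ∃ D : Finset (Finset G), D ⊆ T ∧
      D.card = m ∧ (D : Set (Finset G)).PairwiseDisjoint id ∧ ∀ B ∈ D, B ⊆ X) :
    ∃ X' ⊆ X, X.card + ℓ ≤ X'.card + ℓ * m ∧ ∀ B ∈ T, ¬ B ⊆ X' := by
  set 𝒟 := T.powerset.filter fun D : Finset (Finset G) => (D : Set (Finset G)).PairwiseDisjoint id ∧ ∀ B ∈ D, B ⊆ X
    with h𝒟
  have hne : 𝒟.Nonempty := ⟨∅, by simp [h𝒟]⟩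
  obtain ⟨D, hD, hmax⟩ := Finset.exists_max_image 𝒟 Finset.card hne
  simp only [h𝒟, Finset.mem_filter, Finset.mem_powerset] at hD hmax
  obtain ⟨hDT, hDd, hDX⟩ := hD
  have hcard : D.card < m := by
    by_contra hcon
    push Not at hcon
    obtain ⟨D', hD', hc⟩ := Finset.exists_subset_card_eq hcon
    exact hX ⟨D', hD'.trans hDT, hc, hDd.subset (by exact_mod_cast hD'), fun B hB => hDX B (hD' hB)⟩
  refine ⟨X \ D.biUnion id, Finset.sdiff_subset, ?_, ?_⟩
  · have h1 : (D.biUnion id).card = D.card * ℓ := by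
      rw [Finset.card_biUnion (fun x hx y hy hxy => hDd hx hy hxy)]
      rw [show (∑ u ∈ D, (id u : Finset G).card) = ∑ u ∈ D, ℓ from
        Finset.sum_congr rfl (fun B hB => hT B (hDT hB)),
        Finset.sum_const, smul_eq_mul]
    have h2 := Finset.card_sdiff_add_card_eq_card (show D.biUnion id ⊆ X from
      Finset.biUnion_subset.2 hDX)
    have h3 : (D.card + 1) * ℓ ≤ m * ℓ := Nat.mul_le_mul_right _ hcard
    nlinarith
  · intro B hB hBX
    have hdis : ∀ B' ∈ D, Disjoint B B' := by
      intro B' hB'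
      rw [Finset.disjoint_left]
      intro x hx hx'
      exact (Finset.mem_sdiff.1 (hBX hx)).2 (Finset.mem_biUnion.2 ⟨B', hB', hx'⟩)
    have hBD : B ∉ D := by
      intro h
      have h1 := hdis B h
      rw [disjoint_self, Finset.bot_eq_empty] at h1
      have := hT B hB
      rw [h1, Finset.card_empty] at this
      omega
    have := hmax (insert B D) ⟨Finset.insert_subset hB hDT, by
      rw [Finset.coe_insert]
      exact hDd.insert fun B' hB' _ => hdis B' hB', by
      intro B' hB'
      rcases Finset.mem_insert.1 hB' with rfl | h
      · exact hBX.trans Finset.sdiff_subset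
      · exact hDX B' h⟩
    rw [Finset.card_insert_of_notMem hBD] at this
    omega

lemma aux_lower1 {k : ℕ} (δ : ℝ) (hδ1 : δ < 1) (S : Finset (Fin k → G)) {p : ℝ}
    (h0 : 0 ≤ p) (h1 : p ≤ 1) :
    binomProb p (Finset.univ.filter (fun A : Finset G => StableK δ S A)) ≤ S.card * p ^ k := by
  have hsub : (Finset.univ.filter (fun A : Finset G => StableK δ S A)) ⊆
      (distinctPart S).biUnion fun x => Finset.univ.filter fun X : Finset G =>
        Finset.univ.image x ⊆ X := by
    intro X hX
    simp only [Finset.mem_filter, Finset.mem_univ, true_and, Finset.mem_biUnion] at hX ⊢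
    obtain ⟨-, x, hx, hxX⟩ := hX X (Finset.Subset.refl _) (by
      have : (0:ℝ) ≤ X.card := by positivity
      nlinarith)
    refine ⟨x, hx, ?_⟩
    intro y hy
    obtain ⟨j, _, rfl⟩ := Finset.mem_image.1 hy
    exact hxX j
  refine (aux_bp_mono h0 h1 hsub).trans ((aux_bp_biUnion h0 h1 _ _).trans ?_)
  have hterm : ∀ x ∈ distinctPart S, binomProb p (Finset.univ.filter fun X : Finset G =>
        Finset.univ.image x ⊆ X) ≤ p ^ k := by
    intro x hx
    have hx' : Function.Injective x := (Finset.mem_filter.1 hx).2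
    refine (aux_bp_sup h0 h1 _).trans (le_of_eq ?_)
    rw [Finset.card_image_of_injective _ hx', Finset.card_univ, Fintype.card_fin]
  refine (Finset.sum_le_card_nsmul _ _ _ hterm).trans ?_
  rw [nsmul_eq_mul]
  gcongr
  exact Finset.filter_subset _ _

lemma aux_lower2 [AddCommGroup G] {k : ℕ} (hk : 2 ≤ k) (δ : ℝ) (hδ0 : 0 < δ) (hδ1 : δ < 1)
    (S : Finset (Fin k → G))
    (M : (Fin k → G) →+ (Fin k → G)) (hker : ∀ x, x ∈ S ↔ M x = 0)
    (hα : 0 < alphaR S 1) (hSD : (S.card : ℝ) ≤ 2 * (distinctPart S).card) {p : ℝ}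
    (h0 : 0 ≤ p) (h1 : p ≤ 1) (hp : p < (1 - δ) / (2 * k) / 16 * pMax S) :
    binomProb p (Finset.univ.filter (fun A : Finset G => StableK δ S A)) ≤
      Real.exp (-(p * Fintype.card G / 8)) +
        Real.exp (-((1 - δ) / (2 * k) * (p * Fintype.card G))) := by
  have hkr : (2:ℝ) ≤ k := by exact_mod_cast hk
  set η := (1 - δ) / (2 * k) with hη
  have hηpos : 0 < η := by
    rw [hη]; apply div_pos <;> linarith
  have hkη : k * η = (1 - δ) / 2 := by rw [hη]; field_simp
  have hη1 : η ≤ 1 := by nlinarith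
  set lam := p * Fintype.card G with hlam
  have hlam0 : 0 ≤ lam := by positivity
  obtain ⟨ℓ, hℓ2, hℓk, hq0, hqℓ⟩ := aux_pMax_attained hk S
  obtain ⟨U, hU, hcard⟩ := aux_family S M hker ℓ hℓk
  set T := (distinctPart S).image fun x => U.image x with hTdef
  have hTc : ∀ B ∈ T, B.card = ℓ := by
    intro B hB
    obtain ⟨x, hx, rfl⟩ := Finset.mem_image.1 hB
    have hx' : Function.Injective x := (Finset.mem_filter.1 hx).2
    rw [Finset.card_image_of_injective _ hx', hU]
  have hαr : (0:ℝ) < alphaR S 1 := by exact_mod_cast hα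
  have hμ : (T.card : ℝ) * p ^ ℓ ≤ η * lam / 8 := by
    have a1 : p ^ ℓ ≤ p * (η / 16 * pMax S ^ (ℓ - 1)) := by
      obtain ⟨t, rfl⟩ : ∃ t, ℓ = t + 2 := ⟨ℓ - 2, by omega⟩
      have b1 : p ^ (t + 1) ≤ (η / 16 * pMax S) ^ (t + 1) := pow_le_pow_left₀ h0 hp.le _
      have b2 : (η / 16) ^ (t + 1) ≤ η / 16 := by
        rw [pow_succ]
        have : (η / 16) ^ t ≤ 1 := pow_le_one₀ (by positivity) (by linarith)
        nlinarith
      have b3 : (0:ℝ) ≤ pMax S ^ (t + 1) := by positivity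
      calc p ^ (t + 2) = p * p ^ (t + 1) := by ring
        _ ≤ p * (η / 16 * pMax S) ^ (t + 1) := by gcongr
        _ = p * ((η / 16) ^ (t + 1) * pMax S ^ (t + 1)) := by rw [mul_pow]
        _ ≤ p * (η / 16 * pMax S ^ (t + 1)) := by gcongr
        _ = _ := by rfl
    rw [hqℓ] at a1
    have a2 : (T.card : ℝ) * alphaR S ℓ ≤ S.card := by exact_mod_cast hcard
    have a3 : ((distinctPart S).card : ℝ) ≤ alphaR S 1 * Fintype.card G := by
      exact_mod_cast aux_card_le_alpha_one hk S
    have a4 : (T.card : ℝ) * alphaR S ℓ ≤ 2 * (alphaR S 1 * Fintype.card G) := by linarith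
    calc (T.card : ℝ) * p ^ ℓ ≤ T.card * (p * (η / 16 * (alphaR S ℓ / alphaR S 1))) := by gcongr
      _ = p * (η / 16) * (T.card * alphaR S ℓ) / alphaR S 1 := by ring
      _ ≤ p * (η / 16) * (2 * (alphaR S 1 * Fintype.card G)) / alphaR S 1 :=
          div_le_div_of_nonneg_right (mul_le_mul_of_nonneg_left a4 (by positivity)) hαr.le
      _ = η * lam / 8 := by rw [hlam]; field_simp; ring
  set m := ⌈η * lam⌉₊ with hm
  have hm1 : η * lam ≤ m := Nat.le_ceil _
  have hm2 : (m:ℝ) < η * lam + 1 := Nat.ceil_lt_add_one (by positivity)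
  have hsub : (Finset.univ.filter (fun A : Finset G => StableK δ S A)) ⊆
      (Finset.univ.filter fun X : Finset G => (X.card : ℝ) < p * Fintype.card G / 2) ∪
      (Finset.univ.filter fun X : Finset G => ∃ D : Finset (Finset G), D ⊆ T ∧
      D.card = m ∧ (D : Set (Finset G)).PairwiseDisjoint id ∧ ∀ B ∈ D, B ⊆ X) := by
    intro X hX
    simp only [Finset.mem_filter, Finset.mem_univ, true_and, Finset.mem_union] at hX ⊢
    by_contra hcon
    rw [not_or, not_lt] at hcon
    obtain ⟨X', hX', hc, hB⟩ := aux_maxdisj T ℓ m (by omega) hTc X hcon.2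
    have hcr : (X.card : ℝ) + ℓ ≤ X'.card + ℓ * m := by exact_mod_cast hc
    have hℓr : (ℓ : ℝ) ≤ k := by exact_mod_cast hℓk
    have hℓ0 : (0 : ℝ) ≤ ℓ := by positivity
    obtain ⟨-, x, hx, hxX⟩ := hX X' hX' (by
      have c1 : (ℓ:ℝ) * m ≤ ℓ * (η * lam + 1) := by gcongr
      have c2 : (ℓ:ℝ) * (η * lam) ≤ k * (η * lam) := by gcongr
      have c3 : k * (η * lam) = (1 - δ) * (lam / 2) := by
        rw [← mul_assoc, hkη]; ring
      have c4 : (1 - δ) * (lam / 2) ≤ (1 - δ) * X.card :=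
        mul_le_mul_of_nonneg_left hcon.1 (by linarith)
      linarith)
    refine hB (U.image x) (Finset.mem_image_of_mem _ hx) ?_
    intro y hy
    obtain ⟨j, _, rfl⟩ := Finset.mem_image.1 hy
    exact hxX j
  refine (aux_bp_mono h0 h1 hsub).trans ((aux_bp_union h0 h1 _ _).trans
    (add_le_add (aux_bp_small h0 h1) ((aux_disj h0 h1 T ℓ m hTc).trans ?_)))
  have d1 : (η * lam) ^ m / m.factorial ≤ Real.exp (η * lam) :=
    Real.pow_div_factorial_le_exp _ (by positivity) m
  have d2 : (1 / 8 : ℝ) ≤ Real.exp (-2) := by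
    have e1 := Real.exp_one_lt_d9
    have e2 : Real.exp 2 = Real.exp 1 * Real.exp 1 := by rw [← Real.exp_add]; norm_num
    have e3 : Real.exp 2 ≤ 8 := by rw [e2]; nlinarith [Real.exp_pos 1]
    rw [Real.exp_neg, one_div]
    exact inv_anti₀ (Real.exp_pos _) e3
  calc ((T.card : ℝ) * p ^ ℓ) ^ m / m.factorial ≤ (η * lam / 8) ^ m / m.factorial := by gcongr
    _ = (1 / 8) ^ m * ((η * lam) ^ m / m.factorial) := by
        rw [div_pow, div_pow, one_pow]; ring
    _ ≤ Real.exp (-2) ^ m * Real.exp (η * lam) := by gcongr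
    _ = Real.exp (m * (-2) + η * lam) := by rw [← Real.exp_nat_mul, ← Real.exp_add]
    _ ≤ _ := by
        apply Real.exp_le_exp.2
        linarith

end lower

section upper
variable {G : Type} [Fintype G]

lemma aux_upper {k : ℕ} (δ : ℝ) (hδ0 : 0 < δ) (S : Finset (Fin k → G)) {p : ℝ}
    (h0 : 0 ≤ p) (h1 : p ≤ 1) (s₀ : ℕ)
    (hs : (16 / δ + 1) * s₀ ≤ δ / 16 * (p * Fintype.card G))
    (hwin : AuxWin (fun F => ∃ x ∈ distinctPart S, ∀ j, x j ∈ F)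
      (fun A' => (A'.card : ℝ) ≤ δ / 16 * Fintype.card G) s₀ ∅ Finset.univ) :
    1 - (Real.exp (-(p * Fintype.card G / 8)) + Real.exp (-(δ / 4 * (p * Fintype.card G)))) ≤
    binomProb p (Finset.univ.filter (fun A : Finset G => StableK δ S A)) := by
  have hmono : ∀ A B : Finset G, A ⊆ B → (∃ x ∈ distinctPart S, ∀ j, x j ∈ A) →
      (∃ x ∈ distinctPart S, ∀ j, x j ∈ B) := by
    rintro A B h ⟨x, hx, hxA⟩
    exact ⟨x, hx, fun j => h (hxA j)⟩
  set lam := p * Fintype.card G with hlam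
  have hlam0 : 0 ≤ lam := by positivity
  have hprob := AuxWin.prob hmono (δ / 16 * Fintype.card G) (δ * (lam / 2)) (16 / δ) p s₀
    (by positivity) h0 h1 (fun A h => h) hwin (Finset.disjoint_empty_left _) (by simp)
  have hsub : (Finset.univ : Finset (Finset G)) ⊆
      (Finset.univ.filter (fun A : Finset G => StableK δ S A)) ∪
      ((Finset.univ.filter fun X : Finset G => (X.card : ℝ) < p * Fintype.card G / 2) ∪
      (Finset.univ.filter fun X : Finset G => ∃ I, I ⊆ X ∧ δ * (lam / 2) ≤ (I.card : ℝ) ∧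
        ¬ (∃ x ∈ distinctPart S, ∀ j, x j ∈ I) ∧ ∅ ⊆ I ∧ I ⊆ ∅ ∪ Finset.univ)) := by
    intro X _
    simp only [Finset.mem_filter, Finset.mem_univ, true_and, Finset.mem_union]
    by_contra hcon
    rw [not_or, not_or, not_lt] at hcon
    obtain ⟨c1, c2, c3⟩ := hcon
    apply c1
    intro X' hX' hc
    have hx : ∃ x ∈ distinctPart S, ∀ j, x j ∈ X' := by
      by_contra hno
      refine c3 ⟨X', hX', ?_, hno, by simp, by simp⟩
      refine le_trans ?_ hc
      exact mul_le_mul_of_nonneg_left c2 hδ0.le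
    obtain ⟨x, hx, hxX⟩ := hx
    exact ⟨⟨x, (Finset.mem_filter.1 hx).1, hxX⟩, ⟨x, hx, hxX⟩⟩
  have h2 := aux_bp_mono h0 h1 hsub
  rw [aux_bp_univ] at h2
  have h3 := aux_bp_union h0 h1 (Finset.univ.filter (fun A : Finset G => StableK δ S A))
      ((Finset.univ.filter fun X : Finset G => (X.card : ℝ) < p * Fintype.card G / 2) ∪
      (Finset.univ.filter fun X : Finset G => ∃ I, I ⊆ X ∧ δ * (lam / 2) ≤ (I.card : ℝ) ∧
        ¬ (∃ x ∈ distinctPart S, ∀ j, x j ∈ I) ∧ ∅ ⊆ I ∧ I ⊆ ∅ ∪ Finset.univ))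
  have h4 := aux_bp_union h0 h1
      (Finset.univ.filter fun X : Finset G => (X.card : ℝ) < p * Fintype.card G / 2)
      (Finset.univ.filter fun X : Finset G => ∃ I, I ⊆ X ∧ δ * (lam / 2) ≤ (I.card : ℝ) ∧
        ¬ (∃ x ∈ distinctPart S, ∀ j, x j ∈ I) ∧ ∅ ⊆ I ∧ I ⊆ ∅ ∪ Finset.univ)
  have h5 : binomProb p (Finset.univ.filter fun X : Finset G =>
      (X.card : ℝ) < p * Fintype.card G / 2) ≤ Real.exp (-(lam / 8)) := aux_bp_small (G := G) h0 h1
  have h6 : p ^ (∅ : Finset G).card * (Real.exp (16 / δ * s₀) *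
      Real.exp (Real.exp (-(16 / δ)) * p * (Finset.univ : Finset G).card)) *
        (Real.exp (-(δ * (lam / 2) - s₀)) * Real.exp (2 * p * (δ / 16 * Fintype.card G))) ≤
      Real.exp (-(δ / 4 * lam)) := by
    rw [Finset.card_empty, pow_zero, one_mul, ← Real.exp_add, ← Real.exp_add, ← Real.exp_add,
      Finset.card_univ]
    apply Real.exp_le_exp.2
    have e1 : Real.exp (-(16 / δ)) ≤ δ / 16 := by
      rw [Real.exp_neg]
      have : 16 / δ ≤ Real.exp (16 / δ) := by linarith [Real.add_one_le_exp (16 / δ)]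
      calc (Real.exp (16 / δ))⁻¹ ≤ (16 / δ)⁻¹ := inv_anti₀ (by positivity) this
        _ = δ / 16 := by rw [inv_div]
    have e2 : Real.exp (-(16 / δ)) * p * Fintype.card G ≤ δ / 16 * lam := by
      rw [mul_assoc]
      exact mul_le_mul_of_nonneg_right e1 hlam0
    have e3 : 2 * p * (δ / 16 * Fintype.card G) = δ / 8 * lam := by rw [hlam]; ring
    rw [e3]
    nlinarith
  have h7 : binomProb p
      (Finset.univ.filter fun X : Finset G => ∃ I, I ⊆ X ∧ δ * (lam / 2) ≤ (I.card : ℝ) ∧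
        ¬ (∃ x ∈ distinctPart S, ∀ j, x j ∈ I) ∧ ∅ ⊆ I ∧ I ⊆ ∅ ∪ Finset.univ) ≤
      Real.exp (-(δ / 4 * lam)) := by
    refine le_trans (aux_bp_mono h0 h1 fun X hX => ?_) (hprob.trans h6)
    simp only [Finset.mem_filter] at hX ⊢
    exact hX
  have h8 := h2.trans (h3.trans (add_le_add le_rfl (h4.trans (add_le_add h5 h7))))
  linarith

end upper

lemma aux_qN {G : Type} [Fintype G] [AddCommGroup G] {k : ℕ} (hk : 2 ≤ k)
    (S : Finset (Fin k → G)) (M : (Fin k → G) →+ (Fin k → G))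
    (hinv : ∀ x : G, M (fun _ => x) = 0) (hker : ∀ x, x ∈ S ↔ M x = 0)
    (hS : 0 < S.card) (hSD : (S.card : ℝ) ≤ 2 * (distinctPart S).card) :
    0 < Fintype.card G ∧ 0 < alphaR S 1 ∧ 0 < pMax S ∧
    (Fintype.card G : ℝ) ^ k / S.card ≤ (pMax S * Fintype.card G) ^ (k - 1) := by
  have hSr : (0:ℝ) < S.card := by exact_mod_cast hS
  have hDr : (0:ℝ) < (distinctPart S).card := by linarith
  have hD : 0 < (distinctPart S).card := by exact_mod_cast hDr
  have h1 := aux_card_le_alpha_one hk S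
  have h2 : 0 < alphaR S 1 * Fintype.card G := lt_of_lt_of_le hD h1
  have hα : 0 < alphaR S 1 := Nat.pos_of_mul_pos_right h2
  have hN : 0 < Fintype.card G := Nat.pos_of_mul_pos_left h2
  have hNr : (0:ℝ) < Fintype.card G := by exact_mod_cast hN
  have hαr : (0:ℝ) < alphaR S 1 := by exact_mod_cast hα
  have h3 := aux_alpha_k_pos S (Finset.card_pos.1 hD)
  have h3r : (1:ℝ) ≤ alphaR S k := by exact_mod_cast h3
  have h4 := aux_alpha_le S hα k (by omega) le_rfl
  obtain ⟨ℓ, hℓ2, hℓk, hq0, hqℓ⟩ := aux_pMax_attained hk S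
  have hq : 0 < pMax S := by
    rcases hq0.lt_or_eq with h | h
    · exact h
    · rw [← h, zero_pow (by omega)] at h4
      linarith
  refine ⟨hN, hα, hq, ?_⟩
  rw [div_le_iff₀ hSr]
  have h5 : (alphaR S 1 : ℝ) * Fintype.card G ≤ (distinctPart S).card := by
    exact_mod_cast aux_alpha_one_le hk S M hinv hker
  have h6 : ((distinctPart S).card : ℝ) ≤ S.card := by
    exact_mod_cast Finset.card_le_card (Finset.filter_subset _ _)
  obtain ⟨t, rfl⟩ : ∃ t, k = t + 1 := ⟨k - 1, by omega⟩
  simp only [Nat.add_sub_cancel] at h4 ⊢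
  have h7 : (1:ℝ) ≤ alphaR S 1 * pMax S ^ t := h3r.trans h4
  calc (Fintype.card G : ℝ) ^ (t + 1) = 1 * (Fintype.card G : ℝ) ^ (t + 1) := by ring
    _ ≤ (alphaR S 1 * pMax S ^ t) * (Fintype.card G : ℝ) ^ (t + 1) := by gcongr
    _ = (pMax S * Fintype.card G) ^ t * (alphaR S 1 * Fintype.card G) := by
        rw [mul_pow]; ring
    _ ≤ (pMax S * Fintype.card G) ^ t * S.card := by
        gcongr
        exact h5.trans h6

lemma aux_exp_small (a b : ℝ) (ha : 0 < a) (hb : 0 < b) (e : ℝ) (he : 0 < e) :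
    ∃ L : ℝ, 1 ≤ L ∧ ∀ x, L ≤ x → Real.exp (-(x / a)) + Real.exp (-(b * x)) < e := by
  have t1 : Tendsto (fun x : ℝ => Real.exp (-(x / a))) atTop (nhds 0) :=
    Real.tendsto_exp_neg_atTop_nhds_zero.comp (tendsto_id.atTop_div_const ha)
  have t2 : Tendsto (fun x : ℝ => Real.exp (-(b * x))) atTop (nhds 0) :=
    Real.tendsto_exp_neg_atTop_nhds_zero.comp (tendsto_id.const_mul_atTop hb)
  have t3 := t1.add t2
  rw [add_zero] at t3
  have := t3.eventually_lt_const he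
  obtain ⟨L, hL⟩ := eventually_atTop.1 this
  exact ⟨max L 1, le_max_right _ _, fun x hx => hL x ((le_max_left _ _).trans hx)⟩

/-- threshold function for homomorphism systems. -/
theorem stmt1 (k : ℕ) (hk : 2 ≤ k) (δ : ℝ) (hδ0 : 0 < δ) (hδ1 : δ < 1)
    (G : ℕ → Type) [∀ i, Fintype (G i)] [∀ i, AddCommGroup (G i)]
    (S : ∀ i, Finset (Fin k → G i))
    (M : ∀ i, (Fin k → G i) →+ (Fin k → G i))
    (hinv : ∀ i (x : G i), M i (fun _ => x) = 0)
    (hker : ∀ i (x : Fin k → G i), x ∈ S i ↔ M i x = 0)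
    (γ : ℝ → ℝ) (hnormal : NormalSeq k G S γ) :
    ∃ c₁ c₂ : ℝ, 0 < c₁ ∧ 0 < c₂ ∧
      ∀ p : ℕ → ℝ, (∀ i, 0 ≤ p i ∧ p i ≤ 1) →
        ((∀ i, c₁ * pMax (S i) ≤ p i) →
          Tendsto (fun i => binomProb (p i)
            (Finset.univ.filter (fun A : Finset (G i) => StableK δ (S i) A)))
            atTop (nhds 1)) ∧
        ((∀ i, p i < c₂ * pMax (S i)) →
          Tendsto (fun i => binomProb (p i)
            (Finset.univ.filter (fun A : Finset (G i) => StableK δ (S i) A)))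
            atTop (nhds 0)) := by
  obtain ⟨-, -, hn3, hn4, hn5, hn6⟩ := hnormal
  have hkr : (2:ℝ) ≤ k := by exact_mod_cast hk
  set ε := δ / 16 with hε
  have hε0 : 0 < ε := by positivity
  have hε1 : ε < 1 := by rw [hε]; linarith
  obtain ⟨hγ0, hγ1⟩ := hn5 ε hε0 hε1
  obtain ⟨c, C, hc, hC, hph⟩ := aux_phase k (by omega) (γ ε / (2 * k ^ k)) (by positivity)
  set n := ⌈1 / c⌉₊ with hn
  have hnc : 1 ≤ n * c := by
    have := Nat.le_ceil (1 / c)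
    rwa [div_le_iff₀ hc] at this
  set c₁ : ℝ := (16 / δ + 1) * (n * (2 * C + 1)) * (16 / δ) + 1 with hc₁
  have hc₁1 : 1 ≤ c₁ := by
    have : 0 ≤ (16 / δ + 1) * (n * (2 * C + 1)) * (16 / δ) := by positivity
    rw [hc₁]; linarith
  set η := (1 - δ) / (2 * k) with hη
  have hη0 : 0 < η := by
    rw [hη]; apply div_pos <;> linarith
  -- eventual facts
  have hev1 : ∀ᶠ i in atTop, 0 < (S i).card ∧
      ((S i).card : ℝ) ≤ 2 * (distinctPart (S i)).card ∧
      (1 - γ ε / 2) * (S i).card ≤ (distinctPart (S i)).card := by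
    have e1 := hn4.eventually_const_lt (show (1 / 2 : ℝ) < 1 by norm_num)
    have e2 := hn4.eventually_const_lt (show 1 - γ ε / 2 < 1 by linarith)
    filter_upwards [e1, e2] with i h1 h2
    have hS : 0 < (S i).card := by
      rcases Nat.eq_zero_or_pos (S i).card with h | h
      · rw [h] at h1; norm_num at h1
      · exact h
    have hSr : (0:ℝ) < (S i).card := by exact_mod_cast hS
    rw [lt_div_iff₀ hSr] at h1 h2
    exact ⟨hS, by linarith, h2.le⟩
  have hev2 : ∀ R : ℝ, 1 ≤ R → ∀ᶠ i in atTop, R ≤ pMax (S i) * Fintype.card (G i) := by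
    intro R hR
    filter_upwards [hev1, hn3.eventually_ge_atTop (R ^ (k - 1))] with i h1 h2
    obtain ⟨hN, -, hq, h3⟩ := aux_qN hk (S i) (M i) (hinv i) (hker i) h1.1 h1.2.1
    exact le_of_pow_le_pow_left₀ (by omega) (by positivity) (h2.trans h3)
  refine ⟨c₁, η / 16, by linarith, by positivity, fun p hp => ⟨fun hge => ?_, fun hlt => ?_⟩⟩
  · rw [Metric.tendsto_atTop']
    intro e he
    obtain ⟨L, hL1, hL⟩ := aux_exp_small 8 (δ / 4) (by norm_num) (by positivity) e he
    have := (hev2 L hL1).and hev1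
    obtain ⟨i₀, hi₀⟩ := eventually_atTop.1 this
    refine ⟨i₀, fun i hi => ?_⟩
    obtain ⟨h1, hS, hSD, hγD⟩ := hi₀ i hi.le
    obtain ⟨hN, hα, hq, -⟩ := aux_qN hk (S i) (M i) (hinv i) (hker i) hS hSD
    obtain ⟨p0, p1⟩ := hp i
    set Q := pMax (S i) * Fintype.card (G i) with hQ
    have hQ1 : 1 ≤ Q := hL1.trans h1
    set s := ⌈C * (Q + 1)⌉₊ with hs
    have hs1 : C * (Q + 1) ≤ s := Nat.le_ceil _
    have hs2 : (s : ℝ) < C * (Q + 1) + 1 := Nat.ceil_lt_add_one (by positivity)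
    have hs3 : (s : ℝ) ≤ (2 * C + 1) * Q := by nlinarith
    have hwin := aux_system hk (S i) (γ ε) ε c C hph hγ0 hα
      (aux_alpha_one_le hk (S i) (M i) (hinv i) (hker i)) hN hq (hn6 ε hε0 hε1 i) hγD s n hs1
      hε0.le hnc
    have hlam : c₁ * Q ≤ p i * Fintype.card (G i) := by
      have := mul_le_mul_of_nonneg_right (hge i) (Nat.cast_nonneg (α := ℝ) (Fintype.card (G i)))
      rw [hQ]; linarith
    have hbud : (16 / δ + 1) * ((n * s : ℕ) : ℝ) ≤ δ / 16 * (p i * Fintype.card (G i)) := by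
      have b1 : (16 / δ + 1) * ((n * s : ℕ) : ℝ) ≤ (16 / δ + 1) * (n * ((2 * C + 1) * Q)) := by
        push_cast
        gcongr
      have b2 : (16 / δ + 1) * (n * ((2 * C + 1) * Q)) + δ / 16 * Q = δ / 16 * (c₁ * Q) := by
        rw [hc₁]; field_simp
      have b3 : δ / 16 * (c₁ * Q) ≤ δ / 16 * (p i * Fintype.card (G i)) := by gcongr
      have b4 : 0 ≤ δ / 16 * Q := by positivity
      linarith
    have hup := aux_upper δ hδ0 (S i) p0 p1 (n * s) hbud hwin
    have hle : binomProb (p i)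
        (Finset.univ.filter (fun A : Finset (G i) => StableK δ (S i) A)) ≤ 1 := by
      rw [← aux_bp_univ (G := G i) (p i)]
      exact aux_bp_mono p0 p1 (Finset.subset_univ _)
    have hsm := hL (p i * Fintype.card (G i)) (by nlinarith)
    rw [Real.dist_eq, abs_lt]
    constructor <;> linarith
  · rw [Metric.tendsto_atTop']
    intro e he
    obtain ⟨L, hL1, hL⟩ := aux_exp_small 8 η (by norm_num) hη0 e he
    have := hev1.and (hn3.eventually_gt_atTop (L ^ k / e))
    obtain ⟨i₀, hi₀⟩ := eventually_atTop.1 this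
    refine ⟨i₀, fun i hi => ?_⟩
    obtain ⟨⟨hS, hSD, hγD⟩, h2⟩ := hi₀ i hi.le
    obtain ⟨hN, hα, hq, -⟩ := aux_qN hk (S i) (M i) (hinv i) (hker i) hS hSD
    obtain ⟨p0, p1⟩ := hp i
    have hSr : (0:ℝ) < (S i).card := by exact_mod_cast hS
    have hNr : (0:ℝ) < Fintype.card (G i) := by exact_mod_cast hN
    have hnn := aux_bp_nonneg p0 p1
      (Finset.univ.filter (fun A : Finset (G i) => StableK δ (S i) A))
    have hlt' : binomProb (p i)
        (Finset.univ.filter (fun A : Finset (G i) => StableK δ (S i) A)) < e := by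
      rcases le_total L (p i * Fintype.card (G i)) with hc | hc
      · exact (aux_lower2 hk δ hδ0 hδ1 (S i) (M i) (hker i) hα hSD p0 p1 (hlt i)).trans_lt
          (hL _ hc)
      · refine (aux_lower1 δ hδ1 (S i) p0 p1).trans_lt ?_
        have d1 : (p i * Fintype.card (G i)) ^ k ≤ L ^ k := pow_le_pow_left₀ (by positivity) hc _
        rw [mul_pow] at d1
        rw [div_lt_div_iff₀ he hSr] at h2
        have d2 : (0:ℝ) < (Fintype.card (G i) : ℝ) ^ k := by positivity
        have d3 : p i ^ k * (Fintype.card (G i) : ℝ) ^ k * (S i).card <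
            (Fintype.card (G i) : ℝ) ^ k * e :=
          (mul_le_mul_of_nonneg_right d1 hSr.le).trans_lt h2
        nlinarith
    rw [Real.dist_eq, sub_zero, abs_of_nonneg hnn]
    exact hlt'
end
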